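/- arXiv:1409.4150 — 4 statements merged into one kernel-verified Lean document; each statement's English description precedes it below -/
import Mathlib

section
/- Exclusion-set utilities are feasible: Let X = ∏_{i=1}^n [aᵢ, bᵢ] ⊂ ℝⁿ be a compact box with 0 ≤ aᵢ < bᵢ for each i, and let Z ⊆ X be an exclusion set of X (convex, compact, decreasing, with nonempty interior). Define u_Z : X → ℝ by u_Z(x) = min_{z ∈ Z} ‖z − x‖₁. Then u_Z is nonnegative, coordinatewise nondecreasing, convex, and 1-Lipschitz with respect to the ℓ¹ norm; in particular u_Z ∈ 𝒰(X) ∩ ℒ₁(X) and u_Z is the utility function of an incentive compatible and individually rational mechanism. -/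
open MeasureTheory Set

/-- ℓ¹ distance on `Fin n → ℝ`. -/
noncomputable def l1dist {n : ℕ} (x y : Fin n → ℝ) : ℝ := ∑ i, |x i - y i|

/-- The box `∏ i, [a i, b i]` in `ℝⁿ`. -/
def box {n : ℕ} (a b : Fin n → ℝ) : Set (Fin n → ℝ) := {x | ∀ i, x i ∈ Set.Icc (a i) (b i)}

/-- `u ∈ 𝒰(X)`: continuous, coordinatewise nondecreasing and convex on `X`. -/
def memU {n : ℕ} (X : Set (Fin n → ℝ)) (u : (Fin n → ℝ) → ℝ) : Prop :=
  ContinuousOn u X ∧ (∀ x ∈ X, ∀ y ∈ X, (∀ i, x i ≤ y i) → u x ≤ u y) ∧ ConvexOn ℝ X u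

/-- `u ∈ ℒ₁(X)`: 1-Lipschitz with respect to the ℓ¹ norm on `X`. -/
def memL1 {n : ℕ} (X : Set (Fin n → ℝ)) (u : (Fin n → ℝ) → ℝ) : Prop :=
  ∀ x ∈ X, ∀ y ∈ X, u x - u y ≤ l1dist x y

theorem l1dist_nonneg {n : ℕ} (x y : Fin n → ℝ) : 0 ≤ l1dist x y :=
  Finset.sum_nonneg fun _ _ => abs_nonneg _

theorem l1dist_comm {n : ℕ} (x y : Fin n → ℝ) : l1dist x y = l1dist y x :=
  Finset.sum_congr rfl fun _ _ => abs_sub_comm _ _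

theorem l1dist_triangle {n : ℕ} (x y z : Fin n → ℝ) : l1dist x z ≤ l1dist x y + l1dist y z := by
  unfold l1dist
  rw [← Finset.sum_add_distrib]
  exact Finset.sum_le_sum fun _ _ => abs_sub_le _ _ _

theorem l1dist_le_card_mul_dist {n : ℕ} (x y : Fin n → ℝ) : l1dist x y ≤ n * dist x y := by
  calc l1dist x y ≤ ∑ _i : Fin n, dist x y :=
        Finset.sum_le_sum fun i _ => (Real.dist_eq (x i) (y i)).symm.trans_le (dist_le_pi_dist x y i)
    _ = n * dist x y := by simp

/-- Joint convexity of the ℓ¹ distance. -/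
theorem l1dist_convex_comb_le {n : ℕ} (z w x y : Fin n → ℝ) {s t : ℝ} (hs : 0 ≤ s) (ht : 0 ≤ t) :
    l1dist (s • z + t • w) (s • x + t • y) ≤ s * l1dist z x + t * l1dist w y := by
  unfold l1dist
  rw [Finset.mul_sum, Finset.mul_sum, ← Finset.sum_add_distrib]
  refine Finset.sum_le_sum fun i _ => ?_
  calc |(s • z + t • w) i - (s • x + t • y) i| = |s * (z i - x i) + t * (w i - y i)| := by
        congr 1
        simp only [Pi.add_apply, Pi.smul_apply, smul_eq_mul]
        ring
    _ ≤ |s * (z i - x i)| + |t * (w i - y i)| := abs_add_le _ _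
    _ = s * |z i - x i| + t * |w i - y i| := by
        rw [abs_mul, abs_mul, abs_of_nonneg hs, abs_of_nonneg ht]

/-- Truncating `z` at `x` does not increase the ℓ¹ distance, even measured to a larger point. -/
theorem l1dist_inf_le {n : ℕ} {x y : Fin n → ℝ} (hxy : ∀ i, x i ≤ y i) (z : Fin n → ℝ) :
    l1dist (x ⊓ z) x ≤ l1dist z y := by
  refine Finset.sum_le_sum fun i _ => ?_
  have h := hxy i
  rw [Pi.inf_apply]
  rcases le_total (x i) (z i) with hz | hz
  · simp [inf_eq_left.2 hz]
  · rw [inf_eq_right.2 hz, abs_of_nonpos (by linarith), abs_of_nonpos (by linarith)]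
    linarith

theorem convex_box {n : ℕ} (a b : Fin n → ℝ) : Convex ℝ (box a b) := by
  have h : box a b = Set.Icc a b := by
    ext x
    simp [box, Pi.le_def, forall_and]
  exact h ▸ convex_Icc a b

theorem sInf_l1dist_le {n : ℕ} {Z : Set (Fin n → ℝ)} {z : Fin n → ℝ} (hz : z ∈ Z)
    (x : Fin n → ℝ) : sInf ((fun z => l1dist z x) '' Z) ≤ l1dist z x :=
  csInf_le ⟨0, by rintro _ ⟨w, _, rfl⟩; exact l1dist_nonneg w x⟩ (mem_image_of_mem _ hz)

theorem exists_sInf_l1dist_eq {n : ℕ} {Z : Set (Fin n → ℝ)} (hZ : IsCompact Z)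
    (hne : Z.Nonempty) (x : Fin n → ℝ) :
    ∃ z ∈ Z, l1dist z x = sInf ((fun z => l1dist z x) '' Z) := by
  have hcont : Continuous fun z : Fin n → ℝ => l1dist z x := by
    unfold l1dist
    fun_prop
  exact (hZ.image hcont).sInf_mem (hne.image _)

theorem sInf_l1dist_le_add {n : ℕ} {Z : Set (Fin n → ℝ)} (hZ : IsCompact Z)
    (hne : Z.Nonempty) (x y : Fin n → ℝ) :
    sInf ((fun z => l1dist z x) '' Z) ≤ sInf ((fun z => l1dist z y) '' Z) + l1dist x y := by
  obtain ⟨z, hz, hzy⟩ := exists_sInf_l1dist_eq hZ hne y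
  rw [← hzy, l1dist_comm x y]
  exact (sInf_l1dist_le hz x).trans (l1dist_triangle z y x)

/-- **Exclusion-set utilities are feasible.** Let `Z` be an exclusion set of the box `X`
(convex, compact, decreasing, with nonempty interior). The induced utility
`u_Z(x) = min_{z ∈ Z} ‖z − x‖₁` (expressed as an infimum) is nonnegative, coordinatewise
nondecreasing, convex, and 1-Lipschitz w.r.t. the ℓ¹ norm; in particular
`u_Z ∈ 𝒰(X) ∩ ℒ₁(X)`, so it is the utility function of an IC and IR mechanism. -/
theorem exclusion_set_utility_feasible {n : ℕ} (a b : Fin n → ℝ)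
    (hab : ∀ i, 0 ≤ a i ∧ a i < b i)
    (Z : Set (Fin n → ℝ)) (hZX : Z ⊆ box a b)
    (hZconv : Convex ℝ Z) (hZcomp : IsCompact Z)
    (hZdec : ∀ x ∈ box a b, ∀ y ∈ Z, (∀ i, x i ≤ y i) → x ∈ Z)
    (hZint : (interior Z).Nonempty) :
    (∀ x, 0 ≤ sInf ((fun z => l1dist z x) '' Z)) ∧
    memU (box a b) (fun x => sInf ((fun z => l1dist z x) '' Z)) ∧
    memL1 (box a b) (fun x => sInf ((fun z => l1dist z x) '' Z)) := by
  have hne : Z.Nonempty := hZint.mono interior_subset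
  have hlip := sInf_l1dist_le_add hZcomp hne
  refine ⟨fun x => ?_, ⟨?_, ?_, convex_box a b, ?_⟩, ?_⟩
  · obtain ⟨z, -, hz⟩ := exists_sInf_l1dist_eq hZcomp hne x
    exact hz ▸ l1dist_nonneg z x
  · refine (LipschitzWith.of_le_add_mul (n : NNReal) fun x y => ?_).continuous.continuousOn
    simpa using (hlip x y).trans (add_le_add_right (l1dist_le_card_mul_dist x y) _)
  · intro x hx y _ hxy
    obtain ⟨z, hz, hzy⟩ := exists_sInf_l1dist_eq hZcomp hne y
    have hmem : x ⊓ z ∈ Z := hZdec _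
      (fun i => ⟨le_inf (hx i).1 (hZX hz i).1, inf_le_left.trans (hx i).2⟩) z hz
      fun _ => inf_le_right
    simp only [← hzy]
    exact (sInf_l1dist_le hmem x).trans (l1dist_inf_le hxy z)
  · intro x _ y _ s t hs ht hst
    obtain ⟨z, hz, hzx⟩ := exists_sInf_l1dist_eq hZcomp hne x
    obtain ⟨w, hw, hwy⟩ := exists_sInf_l1dist_eq hZcomp hne y
    simp only [← hzx, ← hwy, smul_eq_mul]
    exact (sInf_l1dist_le (hZconv hz hw hs ht hst) _).trans (l1dist_convex_comb_le z w x y hs ht)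
  · intro x _ y _
    have := hlip x y
    simp only
    linarith
end

section
/- Finite unions of bases suffice for dominance on increasing sets: Let g, h : ℝⁿ_{≥0} → ℝ_{≥0} be bounded Lebesgue-integrable functions with ∫_{ℝⁿ_{≥0}} g dx < ∞ and ∫_{ℝⁿ_{≥0}} h dx < ∞. Suppose that for every finite collection Z of points of ℝⁿ_{≥0}, ∫_{⋃_{z ∈ Z} B_z} g(x) dx ≥ ∫_{⋃_{z ∈ Z} B_z} h(x) dx. Then for every Lebesgue-measurable increasing set A ⊆ ℝⁿ_{≥0}, ∫_A g(x) dx ≥ ∫_A h(x) dx. -/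
open MeasureTheory Set

/-- The nonnegative orthant `ℝⁿ_{≥0}`. -/
def orthant (n : ℕ) : Set (Fin n → ℝ) := {x | ∀ i, 0 ≤ x i}

/-- The base rooted at `z`: all points componentwise at least `z`. -/
def base {n : ℕ} (z : Fin n → ℝ) : Set (Fin n → ℝ) := {x | ∀ i, z i ≤ x i}

theorem measurableSet_base {n : ℕ} (z : Fin n → ℝ) : MeasurableSet (base z) :=
  (isClosed_Ici (a := z)).measurableSet

theorem IsUpperSet.base_subset {n : ℕ} {A : Set (Fin n → ℝ)} (hA : IsUpperSet A)
    {z : Fin n → ℝ} (hz : z ∈ A) : base z ⊆ A :=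
  fun _ hx => hA hx hz

/-- Every point of an open set dominates a member of any given dense sequence lying in that set. -/
theorem IsOpen.exists_mem_base_of_denseRange {n : ℕ} {U : Set (Fin n → ℝ)} (hU : IsOpen U)
    {u : ℕ → Fin n → ℝ} (hu : DenseRange u) {x : Fin n → ℝ} (hx : x ∈ U) :
    ∃ k, u k ∈ U ∧ x ∈ base (u k) := by
  have hV : IsOpen (univ.pi fun i => Iio (x i)) :=
    isOpen_set_pi finite_univ fun i _ => isOpen_Iio
  have hxV : x ∈ closure (univ.pi fun i => Iio (x i)) := by
    rw [closure_pi_set]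
    intro i _
    simp
  obtain ⟨k, hkU, hkV⟩ :=
    hu.exists_mem_open (hU.inter hV) (mem_closure_iff.1 hxV U hU hx)
  exact ⟨k, hkU, fun i => (hkV i (mem_univ i)).le⟩

/-- An upper set agrees almost everywhere with the union of the bases rooted at those of its points
that belong to a given dense sequence. -/
theorem IsUpperSet.iUnion_base_ae_eq {n : ℕ} {A : Set (Fin n → ℝ)} (hA : IsUpperSet A)
    {u : ℕ → Fin n → ℝ} (hu : DenseRange u) :
    (⋃ k, ⋃ (_ : u k ∈ A), base (u k)) =ᵐ[volume] A := by
  refine Filter.EventuallyLE.antisymm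
    (LE.le.eventuallyLE (iUnion₂_subset fun k hk => hA.base_subset hk)) ?_
  refine (interior_ae_eq_of_null_frontier hA.null_frontier).symm.le.trans
    (LE.le.eventuallyLE fun x hx => ?_)
  obtain ⟨k, hk, hxk⟩ := isOpen_interior.exists_mem_base_of_denseRange hu hx
  exact mem_iUnion₂.2 ⟨k, interior_subset hk, hxk⟩

/-- The integral over an upper set is the limit of integrals over finite unions of bases. -/
theorem IsUpperSet.tendsto_setIntegral_biUnion_base {n : ℕ} {A : Set (Fin n → ℝ)}
    [DecidablePred (· ∈ A)] (hA : IsUpperSet A) {u : ℕ → Fin n → ℝ} (hu : DenseRange u)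
    {f : (Fin n → ℝ) → ℝ} (hf : IntegrableOn f A) :
    Filter.Tendsto
      (fun N => ∫ x in ⋃ z ∈ ((((Finset.range N).image u).filter (· ∈ A) :
        Finset (Fin n → ℝ)) : Set (Fin n → ℝ)), base z, f x)
      Filter.atTop (nhds (∫ x in A, f x)) := by
  have hunion : (⋃ N, ⋃ z ∈ ((((Finset.range N).image u).filter (· ∈ A) :
      Finset (Fin n → ℝ)) : Set (Fin n → ℝ)), base z) = ⋃ k, ⋃ (_ : u k ∈ A), base (u k) := by
    ext x
    simp only [mem_iUnion, Finset.mem_coe, Finset.mem_filter, Finset.mem_image, Finset.mem_range]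
    constructor
    · rintro ⟨_, _, ⟨⟨k, _, rfl⟩, hk⟩, hx⟩
      exact ⟨k, hk, hx⟩
    · rintro ⟨k, hk, hx⟩
      exact ⟨k + 1, u k, ⟨⟨k, k.lt_succ_self, rfl⟩, hk⟩, hx⟩
  rw [← setIntegral_congr_set (hA.iUnion_base_ae_eq hu), ← hunion]
  refine tendsto_setIntegral_of_monotone
    (fun N => Finset.measurableSet_biUnion _ fun z _ => measurableSet_base z) ?_ ?_
  · intro M N hMN
    refine biUnion_subset_biUnion_left ?_
    exact_mod_cast Finset.filter_subset_filter _
      (Finset.image_subset_image (Finset.range_subset_range.2 hMN))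
  · rw [hunion]
    exact hf.mono_set (iUnion₂_subset fun k hk => hA.base_subset hk)

/-- **Finite unions of bases suffice for dominance on increasing sets.** Let
`g, h : ℝⁿ_{≥0} → ℝ_{≥0}` be bounded Lebesgue-integrable functions. If
`∫_{⋃_{z ∈ Z} B_z} g ≥ ∫_{⋃_{z ∈ Z} B_z} h` for every finite collection `Z` of points of
`ℝⁿ_{≥0}`, then `∫_A g ≥ ∫_A h` for every Lebesgue-measurable increasing set
`A ⊆ ℝⁿ_{≥0}`. -/
theorem finite_unions_of_bases_suffice {n : ℕ} (g h : (Fin n → ℝ) → ℝ)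
    (hg0 : ∀ x, 0 ≤ g x) (hh0 : ∀ x, 0 ≤ h x)
    (hgbd : ∃ C : ℝ, ∀ x, g x ≤ C) (hhbd : ∃ C : ℝ, ∀ x, h x ≤ C)
    (hgint : IntegrableOn g (orthant n) volume)
    (hhint : IntegrableOn h (orthant n) volume)
    (hbases : ∀ Z : Finset (Fin n → ℝ), (Z : Set (Fin n → ℝ)) ⊆ orthant n →
      (∫ x in ⋃ z ∈ (Z : Set (Fin n → ℝ)), base z, h x) ≤
        ∫ x in ⋃ z ∈ (Z : Set (Fin n → ℝ)), base z, g x) :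
    ∀ A : Set (Fin n → ℝ), MeasurableSet A → A ⊆ orthant n →
      (∀ x ∈ A, ∀ y ∈ orthant n, (∀ i, x i ≤ y i) → y ∈ A) →
      (∫ x in A, h x) ≤ ∫ x in A, g x := by
  intro A _ hAo hA
  classical
  have hup : IsUpperSet A := fun x y hxy hx =>
    hA x hx y (fun i => (hAo hx i).trans (hxy i)) hxy
  have hu := TopologicalSpace.denseRange_denseSeq (Fin n → ℝ)
  refine le_of_tendsto_of_tendsto'
    (hup.tendsto_setIntegral_biUnion_base hu (hhint.mono_set hAo))
    (hup.tendsto_setIntegral_biUnion_base hu (hgint.mono_set hAo))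
    fun N => hbases _ fun z hz => hAo ?_
  exact (Finset.mem_filter.1 hz).2
end

section
/- A sufficient condition for first-order stochastic dominance in the plane: Let 𝒞 = [p₁, q₁) × [p₂, q₂) where q₁, q₂ may be +∞, and let R be a nonempty decreasing subset of 𝒞. Let κ and λ be nonnegative Borel measures on 𝒞 with bounded integrable density functions g, h : 𝒞 → ℝ_{≥0} (with respect to Lebesgue measure) satisfying: (i) g(x,y) = h(x,y) = 0 for all (x,y) ∈ R; (ii) ∫_𝒞 g dx dy = ∫_𝒞 h dx dy < ∞; (iii) for each basis vector e ∈ {(1,0), (0,1)} and every point z ∈ R, ∫_0^{q_i − z_i} (g(z + τe) − h(z + τe)) dτ ≤ 0, where i is the coordinate in which e is nonzero; and (iv) there exist nonnegative functions α : [p₁,q₁) → ℝ_{≥0} and β : [p₂,q₂) → ℝ_{≥0} and a coordinatewise nondecreasing function η : 𝒞 → ℝ such that g(x,y) − h(x,y) = α(x)·β(y)·η(x,y) for all (x,y) ∈ 𝒞 \ R. Then κ ≽₁ λ. -/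
open MeasureTheory Set

/-- A function that is nonnegative after its first positive value gives every relatively upper set
mass at least `min 0` of its total mass. -/
theorem min_zero_integral_le_setIntegral_of_crossing {u : ℝ → ℝ} (hu : Integrable u) {J A : Set ℝ}
    (hA : MeasurableSet A) (hJ : ∀ y ∉ J, u y = 0)
    (hcross : ∀ y y', y < y' → 0 < u y → 0 ≤ u y')
    (hup : ∀ y ∈ J, ∀ y' ∈ J, y ≤ y' → y ∈ A → y' ∈ A) :
    min 0 (∫ y, u y) ≤ ∫ y in A, u y := by
  by_cases hpos : ∃ y ∉ A, 0 < u y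
  · obtain ⟨y, hyA, hy⟩ := hpos
    refine (min_le_left _ _).trans (setIntegral_nonneg hA fun y' hy' => ?_)
    by_cases hJ' : y' ∈ J
    · refine hcross y y' (lt_of_not_ge fun hle => hyA (hup y' hJ' y ?_ hle hy')) hy
      by_contra hyJ
      exact hy.ne' (hJ y hyJ)
    · exact (hJ y' hJ').ge
  · push Not at hpos
    refine (min_le_right _ _).trans ?_
    rw [← integral_add_compl hA hu]
    have := setIntegral_nonpos (μ := volume) hA.compl fun y hy => hpos y hy
    linarith

/-- Two-column Chebyshev inequality: `u = a b e` and `v = a' b e'` with `e ≤ e'` both monotone. -/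
theorem setIntegral_mul_integral_le_of_factor {u v b e e' : ℝ → ℝ} {a a' : ℝ} {J A A' : Set ℝ}
    (hu : Integrable u) (hv : Integrable v) (hA : MeasurableSet A) (hA' : MeasurableSet A')
    (ha : 0 ≤ a) (ha' : 0 ≤ a') (hb : ∀ y, 0 ≤ b y)
    (he : MonotoneOn e J) (he' : MonotoneOn e' J) (hee' : ∀ y ∈ J, e y ≤ e' y)
    (huJ : ∀ y ∉ J, u y = 0) (hvJ : ∀ y ∉ J, v y = 0)
    (hue : ∀ y ∈ J, u y = a * b y * e y) (hve : ∀ y ∈ J, v y = a' * b y * e' y)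
    (hupA : ∀ y ∈ J, ∀ y' ∈ J, y ≤ y' → y ∈ A → y' ∈ A)
    (hupA' : ∀ y ∈ J, ∀ y' ∈ J, y ≤ y' → y ∈ A' → y' ∈ A')
    (hAA' : ∀ y ∈ J, y ∈ A → y ∈ A')
    (hu0 : ∫ y, u y < 0) (hv0 : 0 < ∫ y, v y) :
    (∫ y in A', v y) * ∫ y, u y ≤ (∫ y in A, u y) * ∫ y, v y := by
  have crossing : ∀ {w f : ℝ → ℝ} {c : ℝ}, 0 ≤ c → MonotoneOn f J → (∀ y ∉ J, w y = 0) →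
      (∀ y ∈ J, w y = c * b y * f y) → ∀ y y', y < y' → 0 < w y → 0 ≤ w y' := by
    intro w f c hc hf hwJ hw y y' hyy' hy
    by_cases hyJ : y ∈ J
    · by_cases hyJ' : y' ∈ J
      · rw [hw y hyJ] at hy
        have h1 : 0 ≤ c * b y := mul_nonneg hc (hb y)
        have h2 : 0 < f y := pos_of_mul_pos_right hy h1
        rw [hw y' hyJ']
        exact mul_nonneg (mul_nonneg hc (hb y')) (h2.le.trans (hf hyJ hyJ' hyy'.le))
      · exact (hwJ y' hyJ').ge
    · exact absurd (hwJ y hyJ) hy.ne'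
  have crossu := crossing ha he huJ hue
  have crossv := crossing ha' he' hvJ hve
  have hF' : 0 ≤ ∫ y in A', v y := by
    have := min_zero_integral_le_setIntegral_of_crossing hv hA' hvJ crossv hupA'
    rwa [min_eq_left hv0.le] at this
  rcases le_or_gt 0 (∫ y in A, u y) with hF | hF
  · exact (mul_nonpos_of_nonneg_of_nonpos hF' hu0.le).trans (mul_nonneg hF hv0.le)
  have nonneg_of_pos : ∀ {w : ℝ → ℝ} {B : Set ℝ}, (∀ y ∉ J, w y = 0) →
      (∀ y y', y < y' → 0 < w y → 0 ≤ w y') →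
      (∀ y ∈ J, ∀ y' ∈ J, y ≤ y' → y ∈ B → y' ∈ B) →
      ∀ y ∉ B, 0 < w y → ∀ y' ∈ B, 0 ≤ w y' := by
    intro w B hwJ hw hB y hy hwy y' hy'
    by_cases hyJ' : y' ∈ J
    · refine hw y y' (lt_of_not_ge fun hle => hy (hB y' hyJ' y ?_ hle hy')) hwy
      by_contra hyJ
      exact hwy.ne' (hwJ y hyJ)
    · exact (hwJ y' hyJ').ge
  have hunp : ∀ y ∉ A, u y ≤ 0 := by
    intro y hy
    by_contra! hpos
    exact hF.not_ge (setIntegral_nonneg hA (nonneg_of_pos huJ crossu hupA y hy hpos))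
  have hunp' : ∀ y ∉ A', u y ≤ 0 := by
    intro y hy
    by_cases hyJ : y ∈ J
    · exact hunp y fun h => hy (hAA' y hyJ h)
    · exact (huJ y hyJ).le
  have hF1 : ∫ y in A', u y ≤ ∫ y in A, u y := by
    rw [← integral_indicator hA, ← integral_indicator hA']
    refine integral_mono (hu.indicator hA') (hu.indicator hA) fun y => ?_
    by_cases h : y ∈ A <;> by_cases h' : y ∈ A' <;> simp only [indicator, h, h', if_true, if_false]
    · exact le_rfl
    · by_cases hyJ : y ∈ J
      · exact absurd (hAA' y hyJ h) h'
      · exact (huJ y hyJ).ge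
    · exact hunp y h
    · exact le_rfl
  refine le_trans ?_ (mul_le_mul_of_nonneg_right hF1 hv0.le)
  have hL : ∫ y in A'ᶜ, u y ≤ 0 := setIntegral_nonpos hA'.compl fun y hy => hunp' y hy
  rw [← integral_add_compl hA' hu, ← integral_add_compl hA' hv]
  suffices h : (∫ y in A', v y) * (∫ y in A'ᶜ, u y) ≤ (∫ y in A', u y) * ∫ y in A'ᶜ, v y by
    linarith
  rcases le_or_gt (∫ y in A'ᶜ, v y) 0 with hL' | hL'
  · exact (mul_nonpos_of_nonneg_of_nonpos hF' hL).trans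
      (mul_nonneg_of_nonpos_of_nonpos (hF1.trans hF.le) hL')
  have hvnn : ∀ y ∈ A', 0 ≤ v y := by
    by_contra! hneg
    obtain ⟨y', hy', hneg⟩ := hneg
    refine hL'.not_ge (setIntegral_nonpos hA'.compl fun y hy => ?_)
    by_contra! hpos
    exact hneg.not_ge (nonneg_of_pos hvJ crossv hupA' y hy hpos y' hy')
  have key : ∀ y ∈ A'ᶜ, ∀ y' ∈ A', v y' * u y ≤ u y' * v y := by
    intro y hy y' hy'
    by_cases hyJ : y ∈ J
    swap
    · simp [huJ y hyJ, hvJ y hyJ]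
    by_cases hyJ' : y' ∈ J
    swap
    · simp [huJ y' hyJ', hvJ y' hyJ']
    have hlt : y < y' := lt_of_not_ge fun hle => hy (hupA' y' hyJ' y hyJ hle hy')
    have h1 := hunp' y hy
    have h2 := hvnn y' hy'
    rw [hue y hyJ] at h1
    rw [hve y' hyJ'] at h2
    rw [hue y hyJ, hve y' hyJ', hue y' hyJ', hve y hyJ]
    have m1 := he hyJ hyJ' hlt.le
    have m2 := he' hyJ hyJ' hlt.le
    have m3 := hee' y hyJ
    have m4 := hee' y' hyJ'
    rcases (mul_nonneg ha (hb y)).eq_or_lt with h0 | h0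
    · rcases mul_eq_zero.1 h0.symm with h | h <;> simp [h]
    rcases (mul_nonneg ha' (hb y')).eq_or_lt with h0' | h0'
    · rcases mul_eq_zero.1 h0'.symm with h | h <;> simp [h]
    have s1 : e y ≤ 0 := by
      by_contra! h
      exact h1.not_gt (mul_pos h0 h)
    have s2 : 0 ≤ e' y' := nonneg_of_mul_nonneg_right h2 h0'
    have hprod : e' y' * e y ≤ e y' * e' y := by
      rcases le_total 0 (e y') with h3 | h3 <;> rcases le_total 0 (e' y) with h4 | h4
      · exact (mul_nonpos_of_nonneg_of_nonpos s2 s1).trans (mul_nonneg h3 h4)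
      · nlinarith [mul_nonneg (sub_nonneg.2 m4) (neg_nonneg.2 s1),
          mul_nonneg h3 (sub_nonneg.2 m3)]
      · nlinarith [mul_nonneg (sub_nonneg.2 m2) (neg_nonneg.2 s1),
          mul_nonneg h4 (sub_nonneg.2 m1)]
      · exact (mul_nonpos_of_nonneg_of_nonpos s2 s1).trans (mul_nonneg_of_nonpos_of_nonpos h3 h4)
    have := mul_le_mul_of_nonneg_left hprod (mul_nonneg h0.le h0'.le)
    linarith
  rw [← integral_const_mul, ← integral_const_mul]
  refine setIntegral_mono_on (hu.integrableOn.const_mul _) (hv.integrableOn.const_mul _) hA'.compl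
    fun y hy => ?_
  rw [← integral_mul_const, ← integral_mul_const]
  exact setIntegral_mono_on (hv.integrableOn.mul_const _) (hu.integrableOn.mul_const _) hA'
    fun y' hy' => key y hy y' hy'

/-- Ratios `F / T` over negative `T` lying below those over positive `T` are separated by a single
slope in `[0, 1]`. -/
theorem exists_slope_le {ι : Type*} (s : Set ι) (F T : ι → ℝ)
    (hmin : ∀ i ∈ s, min 0 (T i) ≤ F i)
    (hcross : ∀ i ∈ s, ∀ j ∈ s, T i < 0 → 0 < T j → F j * T i ≤ F i * T j) :
    ∃ θ : ℝ, 0 ≤ θ ∧ θ ≤ 1 ∧ ∀ i ∈ s, θ * T i ≤ F i := by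
  set S : Set ℝ := insert 0 {r | ∃ i ∈ s, T i < 0 ∧ F i / T i = r}
  have hne : S.Nonempty := ⟨0, mem_insert _ _⟩
  have hle1 : ∀ r ∈ S, r ≤ 1 := by
    rintro r (rfl | ⟨i, hi, hT, rfl⟩)
    · exact zero_le_one
    · have := hmin i hi
      rw [min_eq_right hT.le] at this
      exact (div_le_one_of_neg hT).2 this
  have hbdd : BddAbove S := ⟨1, hle1⟩
  refine ⟨sSup S, le_csSup hbdd (mem_insert _ _), csSup_le hne hle1, fun i hi => ?_⟩
  rcases lt_trichotomy (T i) 0 with hT | hT | hT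
  · have : F i / T i ≤ sSup S := le_csSup hbdd (mem_insert_of_mem _ ⟨i, hi, hT, rfl⟩)
    exact (div_le_iff_of_neg hT).1 this
  · have := hmin i hi
    simpa [hT] using this
  · rw [← le_div_iff₀ hT]
    refine csSup_le hne ?_
    have hFi : 0 ≤ F i := by
      have := hmin i hi
      rwa [min_eq_left hT.le] at this
    rintro r (rfl | ⟨j, hj, hTj, rfl⟩)
    · positivity
    · rw [le_div_iff₀ hT, div_mul_eq_mul_div, div_le_iff_of_neg hTj]
      exact hcross j hj i hi hTj hT

/-- Mass of a planar set by vertical sections. -/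
theorem setIntegral_eq_integral_section {φ : ℝ × ℝ → ℝ} (hφ : Integrable φ) {X : Set (ℝ × ℝ)}
    (hX : MeasurableSet X) :
    ∫ z in X, φ z = ∫ x, ∫ y in Prod.mk x ⁻¹' X, φ (x, y) := by
  rw [← integral_indicator hX, Measure.volume_eq_prod, integral_prod _ (hφ.indicator hX)]
  refine integral_congr_ae (.of_forall fun x => ?_)
  exact integral_indicator (measurable_prodMk_left hX)

theorem integrable_integral_section {φ : ℝ × ℝ → ℝ} (hφ : Integrable φ) {X : Set (ℝ × ℝ)}
    (hX : MeasurableSet X) :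
    Integrable fun x => ∫ y in Prod.mk x ⁻¹' X, φ (x, y) := by
  have h := (hφ.indicator hX).integral_prod_left
  refine h.congr (.of_forall fun x => ?_)
  exact integral_indicator (measurable_prodMk_left hX)

theorem indicator_eq_of_mem_iff {ι : Type*} {X Y : Set ι} {f : ι → ℝ} {z : ι}
    (h : z ∈ X ↔ z ∈ Y) : X.indicator f z = Y.indicator f z := by
  by_cases hz : z ∈ X
  · rw [indicator_of_mem hz, indicator_of_mem (h.1 hz)]
  · rw [indicator_of_notMem hz, indicator_of_notMem (mt h.2 hz)]

/-- Sets agreeing on the support of `φ` off one vertical and one horizontal line have the same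
mass. -/
theorem setIntegral_congr_off_lines {φ : ℝ × ℝ → ℝ} {X Y : Set (ℝ × ℝ)} (hX : MeasurableSet X)
    (hY : MeasurableSet Y) (x₀ y₀ : ℝ)
    (h : ∀ z, z.1 ≠ x₀ → z.2 ≠ y₀ → φ z ≠ 0 → (z ∈ X ↔ z ∈ Y)) :
    ∫ z in X, φ z = ∫ z in Y, φ z := by
  rw [← integral_indicator hX, ← integral_indicator hY]
  have h1 : ∀ᵐ z : ℝ × ℝ, z.1 ≠ x₀ :=
    Measure.quasiMeasurePreserving_fst.ae (Measure.ae_ne volume x₀)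
  have h2 : ∀ᵐ z : ℝ × ℝ, z.2 ≠ y₀ :=
    Measure.quasiMeasurePreserving_snd.ae (Measure.ae_ne volume y₀)
  refine integral_congr_ae ?_
  filter_upwards [h1, h2] with z hz1 hz2
  by_cases hz : φ z = 0
  · simp [indicator, hz]
  · exact indicator_eq_of_mem_iff (h z hz1 hz2 hz)

/-- `A` is increasing relative to `C`. -/
def IncreasingIn (C A : Set (ℝ × ℝ)) : Prop :=
  ∀ z ∈ C, ∀ w ∈ C, z ≤ w → z ∈ A → w ∈ A

/-- A signed density `φ` of total mass zero on `J₁ ×ˢ J₂` that vanishes on the decreasing set `R`,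
factors off `R`, and has nonpositive mass on each line through `R`. -/
structure FactoredDensity (J₁ J₂ : Set ℝ) (p₁ p₂ : ℝ) (R : Set (ℝ × ℝ)) (φ : ℝ × ℝ → ℝ)
    (α β : ℝ → ℝ) (η : ℝ × ℝ → ℝ) : Prop where
  integrable : Integrable φ
  integral_eq_zero : ∫ z, φ z = 0
  eq_zero_of_notMem : ∀ z ∉ J₁ ×ˢ J₂, φ z = 0
  isLeast_left : IsLeast J₁ p₁
  isLeast_right : IsLeast J₂ p₂
  subset : R ⊆ J₁ ×ˢ J₂
  decreasing : ∀ a ∈ J₁ ×ˢ J₂, ∀ b ∈ R, a ≤ b → a ∈ R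
  eq_zero_of_mem : ∀ z ∈ R, φ z = 0
  nonneg_left : ∀ t, 0 ≤ α t
  nonneg_right : ∀ t, 0 ≤ β t
  monotoneOn : MonotoneOn η (J₁ ×ˢ J₂)
  factor : ∀ z ∈ (J₁ ×ˢ J₂) \ R, φ z = α z.1 * β z.2 * η z
  column_nonpos : ∀ x, (x, p₂) ∈ R → ∫ y, φ (x, y) ≤ 0
  row_nonpos : ∀ y, (p₁, y) ∈ R → ∫ x, φ (x, y) ≤ 0

namespace FactoredDensity

variable {J₁ J₂ : Set ℝ} {p₁ p₂ : ℝ} {R : Set (ℝ × ℝ)} {φ : ℝ × ℝ → ℝ} {α β : ℝ → ℝ}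
  {η : ℝ × ℝ → ℝ}

/-- The hypotheses are symmetric in the two coordinates. -/
theorem swap (d : FactoredDensity J₁ J₂ p₁ p₂ R φ α β η) :
    FactoredDensity J₂ J₁ p₂ p₁ (Prod.swap ⁻¹' R) (φ ∘ Prod.swap) β α (η ∘ Prod.swap) where
  integrable := d.integrable.swap
  integral_eq_zero := by
    rw [← d.integral_eq_zero, Measure.volume_eq_prod]
    exact integral_prod_swap φ
  eq_zero_of_notMem z hz := d.eq_zero_of_notMem _ fun h => hz ⟨h.2, h.1⟩
  isLeast_left := d.isLeast_right
  isLeast_right := d.isLeast_left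
  subset z hz := ⟨(d.subset hz).2, (d.subset hz).1⟩
  decreasing a ha b hb hab := d.decreasing _ ⟨ha.2, ha.1⟩ _ hb ⟨hab.2, hab.1⟩
  eq_zero_of_mem z hz := d.eq_zero_of_mem _ hz
  nonneg_left := d.nonneg_right
  nonneg_right := d.nonneg_left
  monotoneOn z hz w hw hzw := d.monotoneOn ⟨hz.2, hz.1⟩ ⟨hw.2, hw.1⟩ ⟨hzw.2, hzw.1⟩
  factor z hz := by
    have := d.factor z.swap ⟨⟨hz.1.2, hz.1.1⟩, hz.2⟩
    simp only [Function.comp, this, Prod.fst_swap, Prod.snd_swap]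
    ring
  column_nonpos := d.row_nonpos
  row_nonpos := d.column_nonpos

/-- Along a column, `φ` is nonnegative after its first positive value. -/
theorem column_crossing (d : FactoredDensity J₁ J₂ p₁ p₂ R φ α β η) (x y y' : ℝ) (hy : y < y')
    (hpos : 0 < φ (x, y)) : 0 ≤ φ (x, y') := by
  by_cases hC' : (x, y') ∈ J₁ ×ˢ J₂
  swap
  · exact (d.eq_zero_of_notMem _ hC').ge
  have hC : (x, y) ∈ J₁ ×ˢ J₂ := by
    by_contra h
    exact hpos.ne' (d.eq_zero_of_notMem _ h)
  have hR : (x, y) ∉ R := fun h => hpos.ne' (d.eq_zero_of_mem _ h)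
  have hle : ((x, y) : ℝ × ℝ) ≤ (x, y') := ⟨le_rfl, hy.le⟩
  have hR' : (x, y') ∉ R := fun h => hR (d.decreasing _ hC _ h hle)
  rw [d.factor _ ⟨hC, hR⟩] at hpos
  rw [d.factor _ ⟨hC', hR'⟩]
  have h1 : 0 < η (x, y) :=
    pos_of_mul_pos_right hpos (mul_nonneg (d.nonneg_left _) (d.nonneg_right _))
  exact mul_nonneg (mul_nonneg (d.nonneg_left _) (d.nonneg_right _))
    (h1.le.trans (d.monotoneOn hC hC' hle))

/-- Decreasing sets have nonpositive mass over any set of columns starting in `R`. -/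
theorem setIntegral_columns_nonpos (d : FactoredDensity J₁ J₂ p₁ p₂ R φ α β η)
    {A : Set (ℝ × ℝ)} (hA : MeasurableSet A) (hinc : IncreasingIn (J₁ ×ˢ J₂) A) {X : Set ℝ}
    (hX : MeasurableSet X) (hXR : ∀ x ∈ X, x ∈ J₁ → (x, p₂) ∈ R) :
    ∫ z in Aᶜ ∩ Prod.fst ⁻¹' X, φ z ≤ 0 := by
  rw [setIntegral_eq_integral_section d.integrable (hA.compl.inter (measurable_fst hX))]
  refine integral_nonpos_of_ae ?_
  filter_upwards [d.integrable.prod_right_ae] with x hx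
  by_cases hxX : x ∈ X
  swap
  · have : Prod.mk x ⁻¹' (Aᶜ ∩ Prod.fst ⁻¹' X) = ∅ := by
      ext y; simp [hxX]
    simp [this]
  have : Prod.mk x ⁻¹' (Aᶜ ∩ Prod.fst ⁻¹' X) = (Prod.mk x ⁻¹' A)ᶜ := by
    ext y; simp [hxX]
  simp only [this, Pi.zero_apply]
  by_cases hxJ : x ∈ J₁
  swap
  · have : ∀ y, φ (x, y) = 0 := fun y => d.eq_zero_of_notMem _ fun h => hxJ h.1
    simp [this]
  have hT := d.column_nonpos x (hXR x hxX hxJ)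
  have hAx : MeasurableSet (Prod.mk x ⁻¹' A) := measurable_prodMk_left hA
  have h1 := min_zero_integral_le_setIntegral_of_crossing (J := J₂) hx hAx
    (fun y hy => d.eq_zero_of_notMem _ fun h => hy h.2) (d.column_crossing x)
    (fun y hy y' hy' hle h => hinc (x, y) ⟨hxJ, hy⟩ (x, y') ⟨hxJ, hy'⟩ ⟨le_rfl, hle⟩ h)
  rw [min_eq_right hT] at h1
  have h2 := integral_add_compl hAx hx
  linarith

/-- Decreasing sets have nonpositive mass over any set of rows starting in `R`. -/
theorem setIntegral_rows_nonpos (d : FactoredDensity J₁ J₂ p₁ p₂ R φ α β η)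
    {A : Set (ℝ × ℝ)} (hA : MeasurableSet A) (hinc : IncreasingIn (J₁ ×ˢ J₂) A) {Y : Set ℝ}
    (hY : MeasurableSet Y) (hYR : ∀ y ∈ Y, y ∈ J₂ → (p₁, y) ∈ R) :
    ∫ z in Aᶜ ∩ Prod.snd ⁻¹' Y, φ z ≤ 0 := by
  have h := d.swap.setIntegral_columns_nonpos (A := Prod.swap ⁻¹' A) (measurable_swap hA)
    (fun z hz w hw hzw => hinc _ ⟨hz.2, hz.1⟩ _ ⟨hw.2, hw.1⟩ ⟨hzw.2, hzw.1⟩) hY hYR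
  rw [← integral_indicator ((measurable_swap hA).compl.inter (measurable_fst hY))] at h
  rw [← integral_indicator (hA.compl.inter (measurable_snd hY)), Measure.volume_eq_prod,
    ← integral_prod_swap]
  exact h

/-- Harris-type inequality on a product set disjoint from `R`. -/
theorem min_zero_le_setIntegral_inter_prod (d : FactoredDensity J₁ J₂ p₁ p₂ R φ α β η)
    {A : Set (ℝ × ℝ)} (hA : MeasurableSet A) (hinc : IncreasingIn (J₁ ×ˢ J₂) A) {I K : Set ℝ}
    (hI : MeasurableSet I) (hK : MeasurableSet K) (hIK : Disjoint R (I ×ˢ K)) :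
    min 0 (∫ z in I ×ˢ K, φ z) ≤ ∫ z in A ∩ I ×ˢ K, φ z := by
  have hE : MeasurableSet (I ×ˢ K) := hI.prod hK
  set u : ℝ → ℝ → ℝ := fun x => K.indicator fun y => φ (x, y) with hu
  have huJ : ∀ x, ∀ y ∉ J₂ ∩ K, u x y = 0 := by
    intro x y hy
    by_cases hyK : y ∈ K
    · simp only [hu, indicator, hyK, if_true]
      exact d.eq_zero_of_notMem _ fun h => hy ⟨h.2, hyK⟩
    · simp [hu, hyK]
  have hue : ∀ x ∈ I ∩ J₁, ∀ y ∈ J₂ ∩ K, u x y = α x * β y * η (x, y) := by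
    intro x hx y hy
    simp only [hu, indicator, hy.2, if_true]
    exact d.factor (x, y) ⟨⟨hx.2, hy.1⟩, fun h => disjoint_left.1 hIK h ⟨hx.1, hy.2⟩⟩
  have hum : ∀ x, MeasurableSet (Prod.mk x ⁻¹' A) := fun x => measurable_prodMk_left hA
  have hup : ∀ x ∈ J₁, ∀ y ∈ J₂ ∩ K, ∀ y' ∈ J₂ ∩ K, y ≤ y' → y ∈ Prod.mk x ⁻¹' A →
      y' ∈ Prod.mk x ⁻¹' A :=
    fun x hx y hy y' hy' hle h => hinc (x, y) ⟨hx, hy.1⟩ (x, y') ⟨hx, hy'.1⟩ ⟨le_rfl, hle⟩ h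
  set s : Set ℝ := {x ∈ I ∩ J₁ | Integrable fun y => φ (x, y)}
  have hui : ∀ x ∈ s, Integrable (u x) := fun x hx => hx.2.indicator hK
  obtain ⟨θ, hθ0, hθ1, hθ⟩ := exists_slope_le s (fun x => ∫ y in Prod.mk x ⁻¹' A, u x y)
    (fun x => ∫ y, u x y)
    (by
      intro x hx
      refine min_zero_integral_le_setIntegral_of_crossing (hui x hx) (hum x) (huJ x) ?_
        (hup x hx.1.2)
      intro y y' hyy' hy
      have hyK : y ∈ K := mem_of_indicator_ne_zero hy.ne'
      refine indicator_apply_nonneg fun _ => d.column_crossing x y y' hyy' ?_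
      simpa only [hu, indicator_of_mem hyK] using hy)
    (by
      intro x hx x' hx' hT hT'
      have hηmono : ∀ x ∈ J₁, MonotoneOn (fun y => η (x, y)) (J₂ ∩ K) :=
        fun x hx y hy y' hy' hle => d.monotoneOn ⟨hx, hy.1⟩ ⟨hx, hy'.1⟩ ⟨le_rfl, hle⟩
      have hlt : x < x' := by
        refine lt_of_not_ge fun hle => ?_
        rcases (d.nonneg_left x').eq_or_lt with h0 | h0
        · have : ∀ y, u x' y = 0 := by
            intro y
            by_cases hy : y ∈ J₂ ∩ K
            · simp [hue x' hx'.1 y hy, ← h0]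
            · exact huJ x' y hy
          simp [this] at hT'
        · have hcmp : ∫ y, α x / α x' * u x' y ≤ ∫ y, u x y := by
            refine integral_mono ((hui x' hx').const_mul _) (hui x hx) fun y => ?_
            by_cases hy : y ∈ J₂ ∩ K
            · have h1 : η (x', y) ≤ η (x, y) :=
                d.monotoneOn ⟨hx'.1.2, hy.1⟩ ⟨hx.1.2, hy.1⟩ ⟨hle, le_rfl⟩
              have h2 : α x / α x' * u x' y = α x * β y * η (x', y) := by
                rw [hue x' hx'.1 y hy]
                field_simp
              simp only [h2, hue x hx.1 y hy]
              exact mul_le_mul_of_nonneg_left h1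
                (mul_nonneg (d.nonneg_left _) (d.nonneg_right _))
            · simp [huJ _ y hy]
          rw [integral_const_mul] at hcmp
          exact hT.not_ge
            ((mul_nonneg (div_nonneg (d.nonneg_left _) h0.le) hT'.le).trans hcmp)
      exact setIntegral_mul_integral_le_of_factor (hui x hx) (hui x' hx') (hum x) (hum x')
        (d.nonneg_left x) (d.nonneg_left x') d.nonneg_right (hηmono x hx.1.2) (hηmono x' hx'.1.2)
        (fun y hy => d.monotoneOn ⟨hx.1.2, hy.1⟩ ⟨hx'.1.2, hy.1⟩ ⟨hlt.le, le_rfl⟩)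
        (huJ x) (huJ x') (hue x hx.1) (hue x' hx'.1) (hup x hx.1.2) (hup x' hx'.1.2)
        (fun y hy h => hinc (x, y) ⟨hx.1.2, hy.1⟩ (x', y) ⟨hx'.1.2, hy.1⟩ ⟨hlt.le, le_rfl⟩ h)
        hT hT')
  have hmain : θ * ∫ z in I ×ˢ K, φ z ≤ ∫ z in A ∩ I ×ˢ K, φ z := by
    rw [setIntegral_eq_integral_section d.integrable hE,
      setIntegral_eq_integral_section d.integrable (hA.inter hE), ← integral_const_mul]
    refine integral_mono_ae ((integrable_integral_section d.integrable hE).const_mul _)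
      (integrable_integral_section d.integrable (hA.inter hE)) ?_
    filter_upwards [d.integrable.prod_right_ae] with x hx
    by_cases hxI : x ∈ I
    swap
    · have h1 : Prod.mk x ⁻¹' (I ×ˢ K) = ∅ := by ext y; simp [hxI]
      have h2 : Prod.mk x ⁻¹' (A ∩ I ×ˢ K) = ∅ := by ext y; simp [hxI]
      simp [h1, h2]
    by_cases hxJ : x ∈ J₁
    swap
    · have : ∀ y, φ (x, y) = 0 := fun y => d.eq_zero_of_notMem _ fun h => hxJ h.1
      simp [this]
    have h1 : Prod.mk x ⁻¹' (I ×ˢ K) = K := by ext y; simp [hxI]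
    have h2 : Prod.mk x ⁻¹' (A ∩ I ×ˢ K) = Prod.mk x ⁻¹' A ∩ K := by ext y; simp [hxI]
    have h3 := hθ x ⟨⟨hxI, hxJ⟩, hx⟩
    rw [hu, setIntegral_indicator hK, integral_indicator hK] at h3
    simpa only [h1, h2] using h3
  refine le_trans ?_ hmain
  rcases le_total 0 (∫ z in I ×ˢ K, φ z) with h | h
  · exact (min_le_left _ _).trans (mul_nonneg hθ0 h)
  · refine (min_le_right _ _).trans ?_
    nlinarith

/-- If a point separates the increasing set `A` from `R`, then `A` has nonnegative mass. -/
theorem setIntegral_nonneg_of_corner (d : FactoredDensity J₁ J₂ p₁ p₂ R φ α β η)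
    {A : Set (ℝ × ℝ)} (hA : MeasurableSet A) (hinc : IncreasingIn (J₁ ×ˢ J₂) A) (x₁ y₁ : ℝ)
    (hR : ∀ z ∈ J₁ ×ˢ J₂, z.1 < x₁ → z.2 < y₁ → z ∈ R)
    (hAbove : ∀ z ∈ J₁ ×ˢ J₂, x₁ < z.1 → y₁ < z.2 → z ∈ A)
    (hX : ∀ x ∈ J₁, x < x₁ → (x, p₂) ∈ R) (hY : ∀ y ∈ J₂, y < y₁ → (p₁, y) ∈ R) :
    0 ≤ ∫ z in A, φ z := by
  have h1 := d.setIntegral_columns_nonpos hA hinc (measurableSet_Iio (a := x₁))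
    fun x hx hxJ => hX x hxJ hx
  have h2 := d.setIntegral_rows_nonpos hA hinc (measurableSet_Iio (a := y₁))
    fun y hy hyJ => hY y hyJ hy
  have h3 := integral_add_compl hA d.integrable
  rw [d.integral_eq_zero] at h3
  have hm1 : MeasurableSet (Prod.fst ⁻¹' Iio x₁ : Set (ℝ × ℝ)) := measurable_fst measurableSet_Iio
  have hm2 : MeasurableSet (Prod.snd ⁻¹' Iio y₁ : Set (ℝ × ℝ)) := measurable_snd measurableSet_Iio
  have h4 := integral_inter_add_sdiff (s := Aᶜ) hm1 d.integrable.integrableOn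
  have h5 : ∫ z in Aᶜ \ Prod.fst ⁻¹' Iio x₁, φ z = ∫ z in Aᶜ ∩ Prod.snd ⁻¹' Iio y₁, φ z := by
    refine setIntegral_congr_off_lines (hA.compl.diff hm1) (hA.compl.inter hm2) x₁ y₁
      fun z hz1 hz2 hz => ?_
    have hzC : z ∈ J₁ ×ˢ J₂ := by
      by_contra h
      exact hz (d.eq_zero_of_notMem z h)
    have hzR : z ∉ R := fun h => hz (d.eq_zero_of_mem z h)
    simp only [mem_sdiff, mem_inter_iff, mem_compl_iff, mem_preimage, mem_Iio, not_lt]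
    refine and_congr_right fun hzA => ⟨fun h => ?_, fun h => ?_⟩
    · by_contra! h'
      exact hzA (hAbove z hzC (lt_of_le_of_ne h hz1.symm) (lt_of_le_of_ne h' hz2.symm))
    · by_contra! h'
      exact hzR (hR z hzC h' h)
  linarith

/-- Every increasing set has nonnegative mass. -/
theorem setIntegral_nonneg_of_increasing (d : FactoredDensity J₁ J₂ p₁ p₂ R φ α β η)
    (hJ₁ : J₁.OrdConnected) (hne : R.Nonempty) {A : Set (ℝ × ℝ)} (hA : MeasurableSet A)
    (hinc : IncreasingIn (J₁ ×ˢ J₂) A) : 0 ≤ ∫ z in A, φ z := by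
  by_contra! hneg
  have hcompl := integral_add_compl hA d.integrable
  rw [d.integral_eq_zero] at hcompl
  have hdiv : ∀ z ∈ R, ∀ x ∈ J₁, ∀ y ∈ J₂, x ≤ z.1 → y ≤ z.2 → (x, y) ∈ R :=
    fun z hz x hx y hy h1 h2 => d.decreasing _ ⟨hx, hy⟩ z hz ⟨h1, h2⟩
  have hp₁ := d.isLeast_left
  have hp₂ := d.isLeast_right
  have hsupp : ∀ z, φ z ≠ 0 → z ∈ J₁ ×ˢ J₂ := fun z hz => by
    by_contra h
    exact hz (d.eq_zero_of_notMem z h)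
  obtain ⟨x', hx'J, hx'⟩ : ∃ x ∈ J₁, (x, p₂) ∉ R := by
    by_contra! h
    have := d.setIntegral_columns_nonpos hA hinc MeasurableSet.univ fun x _ hx => h x hx
    rw [preimage_univ, inter_univ] at this
    linarith
  obtain ⟨y', hy'J, hy'⟩ : ∃ y ∈ J₂, (p₁, y) ∉ R := by
    by_contra! h
    have := d.setIntegral_rows_nonpos hA hinc MeasurableSet.univ fun y _ hy => h y hy
    rw [preimage_univ, inter_univ] at this
    linarith
  have hpR : (p₁, p₂) ∈ R := by
    obtain ⟨z, hz⟩ := hne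
    exact hdiv z hz _ hp₁.1 _ hp₂.1 (hp₁.2 (d.subset hz).1) (hp₂.2 (d.subset hz).2)
  -- `a` bounds the columns that start in `R`
  set a := sSup {x | (x, p₂) ∈ R}
  have hbdd : BddAbove {x | (x, p₂) ∈ R} := by
    refine ⟨x', fun x hx => le_of_not_gt fun hlt => hx' ?_⟩
    exact hdiv _ hx _ hx'J _ hp₂.1 hlt.le le_rfl
  have hlow : ∀ x ∈ J₁, x < a → (x, p₂) ∈ R := by
    intro x hx hxa
    obtain ⟨w, hw, hxw⟩ := exists_lt_of_lt_csSup ⟨p₁, hpR⟩ hxa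
    exact hdiv _ hw _ hx _ hp₂.1 hxw.le le_rfl
  have hhigh : ∀ z ∈ R, z.1 ≤ a := fun z hz =>
    le_csSup hbdd (hdiv z hz _ (d.subset hz).1 _ hp₂.1 le_rfl (hp₂.2 (d.subset hz).2))
  have hincI : ∀ c, IncreasingIn (J₁ ×ˢ J₂) (Ioi c ×ˢ univ) :=
    fun c z _ w _ hzw hz => ⟨lt_of_lt_of_le hz.1 hzw.1, trivial⟩
  have hmI : ∀ c : ℝ, MeasurableSet (Ioi c ×ˢ (univ : Set ℝ)) :=
    fun c => measurableSet_Ioi.prod MeasurableSet.univ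
  have hdisj : ∀ c, a ≤ c → Disjoint R (Ioi c ×ˢ univ) := fun c hc =>
    disjoint_left.2 fun z hz hz' => (hc.trans_lt hz'.1).not_ge (hhigh z hz)
  have hhalf : ∀ c, a ≤ c → 0 ≤ ∫ z in Ioi c ×ˢ univ, φ z := by
    intro c hc
    have h1 : 0 ≤ ∫ z in Ioi a ×ˢ univ, φ z :=
      d.setIntegral_nonneg_of_corner (hmI a) (hincI a) a p₂
        (fun z hz _ h => absurd (hp₂.2 hz.2) h.not_ge) (fun z _ h _ => ⟨h, trivial⟩) hlow
        (fun y hy h => absurd (hp₂.2 hy) h.not_ge)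
    have h2 := d.min_zero_le_setIntegral_inter_prod (hmI c) (hincI c) measurableSet_Ioi
      MeasurableSet.univ (hdisj a le_rfl)
    rwa [min_eq_left h1, inter_eq_left.2 (prod_mono (Ioi_subset_Ioi hc) subset_rfl)] at h2
  set Φ : ℝ → ℝ := fun c => ∫ z in A ∩ Prod.fst ⁻¹' Iio c, φ z with hΦ
  have hmF : ∀ c : ℝ, MeasurableSet (Prod.fst ⁻¹' Iio c : Set (ℝ × ℝ)) :=
    fun c => measurable_fst measurableSet_Iio
  have hsplit : ∀ c, ∫ z in A, φ z = Φ c + ∫ z in A ∩ Ioi c ×ˢ univ, φ z := by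
    intro c
    rw [← integral_inter_add_sdiff (hmF c) d.integrable.integrableOn]
    congr 1
    refine setIntegral_congr_off_lines (hA.diff (hmF c)) (hA.inter (hmI c)) c 0
      fun z hz _ _ => ?_
    simp only [mem_sdiff, mem_preimage, mem_Iio, not_lt, mem_inter_iff, mem_prod, mem_Ioi,
      mem_univ, and_true]
    exact and_congr_right fun _ => ⟨fun h => lt_of_le_of_ne h hz.symm, le_of_lt⟩
  have hΦneg : ∀ c, a ≤ c → Φ c < 0 := by
    intro c hc
    have h := d.min_zero_le_setIntegral_inter_prod hA hinc measurableSet_Ioi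
      MeasurableSet.univ (hdisj c hc)
    rw [min_eq_left (hhalf c hc)] at h
    linarith [hsplit c]
  have hΦcont : Continuous Φ := by
    simp only [hΦ, ← integral_indicator (hA.inter (hmF _))]
    refine continuous_iff_continuousAt.2 fun c => continuousAt_of_dominated
      (bound := fun z => ‖φ z‖)
      (.of_forall fun x => (d.integrable.indicator (hA.inter (hmF x))).aestronglyMeasurable)
      (.of_forall fun x => .of_forall fun z => norm_indicator_le_norm_self _ _)
      d.integrable.norm ?_
    have h1 : ∀ᵐ z : ℝ × ℝ, z.1 ≠ c :=
      Measure.quasiMeasurePreserving_fst.ae (Measure.ae_ne volume c)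
    filter_upwards [h1] with z hz
    refine continuousAt_const (y := (A ∩ Prod.fst ⁻¹' Iio c).indicator φ z) |>.congr ?_
    rcases lt_or_gt_of_ne hz with h | h
    · filter_upwards [lt_mem_nhds h] with x hx
      exact indicator_eq_of_mem_iff (by simp [h, hx])
    · filter_upwards [gt_mem_nhds h] with x hx
      exact indicator_eq_of_mem_iff (by simp [h.not_gt, hx.not_gt])
  -- `c` is the last abscissa to the left of which `A` has nonnegative mass
  set Z : Set ℝ := {x | p₁ ≤ x ∧ 0 ≤ Φ x}
  have hZbdd : ∀ x ∈ Z, x ≤ a := fun x hx => le_of_not_gt fun h => (hΦneg x h.le).not_ge hx.2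
  have hZne : p₁ ∈ Z := by
    refine ⟨le_rfl, (setIntegral_eq_zero_of_forall_eq_zero fun z hz => ?_).ge⟩
    exact d.eq_zero_of_notMem z fun h => (hp₁.2 h.1).not_gt hz.2
  have hZcl : IsClosed Z := isClosed_Ici.inter (isClosed_Ici.preimage hΦcont)
  set c := sSup Z
  obtain ⟨hpc, hΦc⟩ : c ∈ Z := hZcl.csSup_mem ⟨p₁, hZne⟩ ⟨a, hZbdd⟩
  have hclast : ∀ x ∈ Z, x ≤ c := fun x hx => le_csSup ⟨a, hZbdd⟩ hx
  have hca : c < a := lt_of_not_ge fun h => (hΦneg c h).not_ge hΦc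
  have hcJ : c ∈ J₁ := by
    obtain ⟨w, hw, hcw⟩ := exists_lt_of_lt_csSup ⟨p₁, hpR⟩ hca
    exact hJ₁.out hp₁.1 (d.subset hw).1 ⟨hpc, hcw.le⟩
  have hcR : (c, p₂) ∈ R := hlow c hcJ hca
  set b := sSup {y | (c, y) ∈ R}
  have hbbdd : BddAbove {y | (c, y) ∈ R} := by
    refine ⟨y', fun y hy => le_of_not_gt fun hlt => hy' ?_⟩
    exact hdiv _ hy _ hp₁.1 _ hy'J hpc hlt.le
  have hRlow : ∀ x ∈ J₁, ∀ y ∈ J₂, x ≤ c → y < b → (x, y) ∈ R := by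
    intro x hx y hy hxc hyb
    obtain ⟨w, hw, hyw⟩ := exists_lt_of_lt_csSup ⟨p₂, hcR⟩ hyb
    exact hdiv _ hw _ hx _ hy hxc hyw.le
  have hRhigh : ∀ z ∈ R, c ≤ z.1 → z.2 ≤ b := fun z hz hcz =>
    le_csSup hbbdd (hdiv z hz _ hcJ _ (d.subset hz).2 hcz le_rfl)
  have corner : ∀ {B : Set (ℝ × ℝ)}, MeasurableSet B → IncreasingIn (J₁ ×ˢ J₂) B →
      (∀ z ∈ J₁ ×ˢ J₂, c < z.1 → b < z.2 → z ∈ B) → 0 ≤ ∫ z in B, φ z :=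
    fun hB hincB hab => d.setIntegral_nonneg_of_corner hB hincB c b
      (fun z hz h1 h2 => hRlow _ hz.1 _ hz.2 h1.le h2) hab
      (fun x hx h => hlow x hx (h.trans hca)) (fun y hy h => hRlow _ hp₁.1 y hy hpc h)
  set Q : Set (ℝ × ℝ) := Ioi c ×ˢ Ioi b
  have hQm : MeasurableSet Q := measurableSet_Ioi.prod measurableSet_Ioi
  have hQinc : IncreasingIn (J₁ ×ˢ J₂) Q :=
    fun z _ w _ hzw hz => ⟨lt_of_lt_of_le hz.1 hzw.1, lt_of_lt_of_le hz.2 hzw.2⟩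
  have hQR : Disjoint R Q :=
    disjoint_left.2 fun z hz hzQ => (hRhigh z hz hzQ.1.le).not_gt hzQ.2
  have hQ0 : 0 ≤ ∫ z in Q, φ z := corner hQm hQinc fun z _ h1 h2 => ⟨h1, h2⟩
  -- `V` collects the columns right of `c` in which `A` reaches below `b`
  set V : Set ℝ := {x | x ∈ J₁ ∧ c < x ∧ ∃ y ∈ J₂, y < b ∧ (x, y) ∈ A}
  have hVmem : ∀ z, z.2 ≠ b → φ z ≠ 0 → z ∈ A → c < z.1 → z.1 ∉ V → b < z.2 := by
    intro z hz2 hz hzA hcz hzV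
    refine lt_of_not_ge fun hle => hzV ⟨(hsupp z hz).1, hcz, z.2, (hsupp z hz).2, ?_, hzA⟩
    exact lt_of_le_of_ne hle hz2
  rcases V.eq_empty_or_nonempty with hVe | hVne
  · have h1 : ∫ z in A ∩ Ioi c ×ˢ univ, φ z = ∫ z in A ∩ Q, φ z := by
      refine setIntegral_congr_off_lines (hA.inter (hmI c)) (hA.inter hQm) c b
        fun z _ hz2 hz => ⟨fun h => ⟨h.1, h.2.1, ?_⟩, fun h => ⟨h.1, h.2.1, trivial⟩⟩
      exact hVmem z hz2 hz h.1 h.2.1 (by simp [hVe])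
    have h2 := d.min_zero_le_setIntegral_inter_prod hA hinc measurableSet_Ioi measurableSet_Ioi hQR
    rw [min_eq_left hQ0] at h2
    linarith [hsplit c]
  have hVbdd : BddBelow V := ⟨c, fun x hx => hx.2.1.le⟩
  set s := sInf V
  have hcs : c ≤ s := le_csInf hVne fun x hx => hx.2.1.le
  have hsA : ∀ z ∈ J₁ ×ˢ J₂, s < z.1 → b < z.2 → z ∈ A := by
    intro z hz hsz hbz
    obtain ⟨w, ⟨hwJ, -, y, hyJ, hyb, hwA⟩, hwz⟩ := exists_lt_of_csInf_lt hVne hsz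
    exact hinc (w, y) ⟨hwJ, hyJ⟩ z hz ⟨hwz.le, (hyb.trans hbz).le⟩ hwA
  rcases hcs.eq_or_lt with hcs' | hcs'
  · exact hneg.not_ge (corner hA hinc fun z hz h1 h2 => hsA z hz (hcs' ▸ h1) h2)
  set E : Set (ℝ × ℝ) := Ioo c s ×ˢ Ioi b
  have hEm : MeasurableSet E := measurableSet_Ioo.prod measurableSet_Ioi
  have hER : Disjoint R E := hQR.mono_right (prod_mono Ioo_subset_Ioi_self subset_rfl)
  have hH := d.min_zero_le_setIntegral_inter_prod hA hinc measurableSet_Ioo measurableSet_Ioi hER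
  rcases le_total 0 (∫ z in E, φ z) with hE0 | hE0
  · rw [min_eq_left hE0] at hH
    have h1 := integral_inter_add_sdiff (s := A ∩ Prod.fst ⁻¹' Iio s) (hmF c)
      d.integrable.integrableOn
    have h2 : A ∩ Prod.fst ⁻¹' Iio s ∩ Prod.fst ⁻¹' Iio c = A ∩ Prod.fst ⁻¹' Iio c := by
      rw [inter_assoc, ← preimage_inter, inter_eq_right.2 (Iio_subset_Iio hcs)]
    have h3 : ∫ z in (A ∩ Prod.fst ⁻¹' Iio s) \ Prod.fst ⁻¹' Iio c, φ z = ∫ z in A ∩ E, φ z := by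
      refine setIntegral_congr_off_lines ((hA.inter (hmF s)).diff (hmF c)) (hA.inter hEm) c b
        fun z hz1 hz2 hz => ⟨fun h => ?_, fun h => ⟨⟨h.1, h.2.1.2⟩, h.2.1.1.not_gt⟩⟩
      have hcz : c < z.1 := lt_of_le_of_ne (not_lt.1 h.2) hz1.symm
      exact ⟨h.1.1, ⟨hcz, h.1.2⟩, hVmem z hz2 hz h.1.1 hcz
        fun hv => (csInf_le hVbdd hv).not_gt h.1.2⟩
    rw [h2, h3] at h1
    have hΦs : 0 ≤ Φ s := by
      rw [hΦ] at hΦc ⊢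
      exact (add_nonneg hΦc hH).trans h1.le
    exact hcs'.not_ge (hclast s ⟨hpc.trans hcs, hΦs⟩)
  · rw [min_eq_right hE0] at hH
    have h0 : 0 ≤ ∫ z in A ∪ Q, φ z := by
      refine corner (hA.union hQm) ?_ fun z _ h1 h2 => Or.inr ⟨h1, h2⟩
      exact fun z hz w hw hzw h => h.imp (hinc z hz w hw hzw) (hQinc z hz w hw hzw)
    have h1 := integral_inter_add_sdiff (s := A ∪ Q) hA d.integrable.integrableOn
    rw [union_inter_cancel_left, union_sdiff_left] at h1
    have h2 := integral_inter_add_sdiff (s := E) hA d.integrable.integrableOn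
    rw [inter_comm] at h2
    have h3 : ∫ z in Q \ A, φ z = ∫ z in E \ A, φ z := by
      refine setIntegral_congr_off_lines (hQm.diff hA) (hEm.diff hA) s b
        fun z hz1 _ hz => ⟨fun h => ⟨⟨⟨h.1.1, ?_⟩, h.1.2⟩, h.2⟩,
          fun h => ⟨⟨h.1.1.1, h.1.2⟩, h.2⟩⟩
      refine lt_of_not_ge fun hle => h.2 (hsA z (hsupp z hz) (lt_of_le_of_ne hle hz1.symm) h.1.2)
    linarith

end FactoredDensity

/-- Densities ordered on all superlevel sets of `F ≥ 0` are ordered when integrated against `F`. -/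
theorem integral_mul_le_integral_mul_of_superlevel {X : Type*} [MeasurableSpace X] {μ : Measure X}
    {F g h : X → ℝ} (hF : Measurable F) (hg : Measurable g) (hh : Measurable h)
    (hF0 : ∀ z, 0 ≤ F z) (hg0 : ∀ z, 0 ≤ g z) (hh0 : ∀ z, 0 ≤ h z)
    (hgi : Integrable g μ) (hhi : Integrable h μ) (hFg : Integrable (fun z => F z * g z) μ)
    (hle : ∀ t, ∫ z in {z | t < F z}, h z ∂μ ≤ ∫ z in {z | t < F z}, g z ∂μ) :
    ∫ z, F z * h z ∂μ ≤ ∫ z, F z * g z ∂μ := by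
  have layer : ∀ k : X → ℝ, Measurable k → (∀ z, 0 ≤ k z) → Integrable k μ →
      ∫⁻ z, ENNReal.ofReal (F z * k z) ∂μ =
        ∫⁻ t in Ioi (0 : ℝ), ENNReal.ofReal (∫ z in {z | t < F z}, k z ∂μ) := by
    intro k hk hk0 hki
    have h1 := lintegral_eq_lintegral_meas_lt (μ.withDensity fun z => ENNReal.ofReal (k z))
      (.of_forall hF0) hF.aemeasurable
    rw [lintegral_withDensity_eq_lintegral_mul _ hk.ennreal_ofReal hF.ennreal_ofReal] at h1
    calc ∫⁻ z, ENNReal.ofReal (F z * k z) ∂μ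
        = ∫⁻ z, ((fun z => ENNReal.ofReal (k z)) * fun z => ENNReal.ofReal (F z)) z ∂μ :=
          lintegral_congr fun z => by
            rw [ENNReal.ofReal_mul (hF0 z), mul_comm]
            rfl
      _ = _ := by
          rw [h1]
          refine lintegral_congr fun t => ?_
          rw [withDensity_apply _ (measurableSet_lt measurable_const hF),
            ofReal_integral_eq_lintegral_ofReal hki.integrableOn (.of_forall hk0)]
  rw [integral_eq_lintegral_of_nonneg_ae (.of_forall fun z => mul_nonneg (hF0 z) (hh0 z))
      (hF.mul hh).aestronglyMeasurable,
    integral_eq_lintegral_of_nonneg_ae (.of_forall fun z => mul_nonneg (hF0 z) (hg0 z))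
      (hF.mul hg).aestronglyMeasurable]
  refine ENNReal.toReal_mono hFg.lintegral_lt_top.ne ?_
  rw [layer h hh hh0 hhi, layer g hg hg0 hgi]
  exact lintegral_mono fun t => ENNReal.ofReal_le_ofReal (hle t)

/-- **A sufficient condition for first-order stochastic dominance in the plane.** Let
`𝒞 = [p₁,q₁) × [p₂,q₂)` (the upper endpoints `q₁, q₂ : EReal` may be `+∞`), let `R` be a
nonempty decreasing subset of `𝒞`, and let `κ, λ` be the measures with bounded integrable
densities `g, h ≥ 0` vanishing outside `𝒞`. Assume: (i) `g = h = 0` on `R`; (ii)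
`∫_𝒞 g = ∫_𝒞 h < ∞`; (iii) integrating `g − h` rightwards or upwards from any point of `R`
to the boundary gives a nonpositive value; (iv) `g − h = α(x)·β(y)·η(x,y)` on `𝒞 \ R` with
`α, β ≥ 0` and `η` coordinatewise nondecreasing. Then `κ ≽₁ λ`: for every bounded
measurable coordinatewise nondecreasing `f` on `𝒞`, `∫ f·g ≥ ∫ f·h`. -/
theorem plane_fosd_sufficient (p₁ p₂ : ℝ) (q₁ q₂ : EReal)
    (hq₁ : (p₁ : EReal) < q₁) (hq₂ : (p₂ : EReal) < q₂)
    (C : Set (ℝ × ℝ))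
    (hC : C = {z | p₁ ≤ z.1 ∧ (z.1 : EReal) < q₁ ∧ p₂ ≤ z.2 ∧ (z.2 : EReal) < q₂})
    (R : Set (ℝ × ℝ)) (hRC : R ⊆ C) (hRne : R.Nonempty)
    (hRdec : ∀ a ∈ C, ∀ b ∈ R, a.1 ≤ b.1 → a.2 ≤ b.2 → a ∈ R)
    (g h : ℝ × ℝ → ℝ) (hgm : Measurable g) (hhm : Measurable h)
    (hg0 : ∀ z, 0 ≤ g z) (hh0 : ∀ z, 0 ≤ h z)
    (hgbd : ∃ M : ℝ, ∀ z, g z ≤ M) (hhbd : ∃ M : ℝ, ∀ z, h z ≤ M)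
    (hgC : ∀ z ∉ C, g z = 0) (hhC : ∀ z ∉ C, h z = 0)
    (hgint : Integrable g) (hhint : Integrable h)
    -- (i)
    (hR0 : ∀ z ∈ R, g z = 0 ∧ h z = 0)
    -- (ii)
    (heq : (∫ z, g z) = ∫ z, h z)
    -- (iii)
    (hline₁ : ∀ z ∈ R,
      (∫ τ in {τ : ℝ | 0 ≤ τ ∧ ((z.1 + τ, z.2) : ℝ × ℝ) ∈ C},
        (g (z.1 + τ, z.2) - h (z.1 + τ, z.2))) ≤ 0)
    (hline₂ : ∀ z ∈ R,
      (∫ τ in {τ : ℝ | 0 ≤ τ ∧ ((z.1, z.2 + τ) : ℝ × ℝ) ∈ C},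
        (g (z.1, z.2 + τ) - h (z.1, z.2 + τ))) ≤ 0)
    -- (iv)
    (hfactor : ∃ (α β : ℝ → ℝ) (η : ℝ × ℝ → ℝ),
      (∀ t, 0 ≤ α t) ∧ (∀ t, 0 ≤ β t) ∧
      (∀ z ∈ C, ∀ w ∈ C, z.1 ≤ w.1 → z.2 ≤ w.2 → η z ≤ η w) ∧
      ∀ z ∈ C \ R, g z - h z = α z.1 * β z.2 * η z) :
    ∀ f : ℝ × ℝ → ℝ, Measurable f → (∃ M : ℝ, ∀ z, |f z| ≤ M) →
      (∀ z ∈ C, ∀ w ∈ C, z.1 ≤ w.1 → z.2 ≤ w.2 → f z ≤ f w) →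
      (∫ z, f z * h z) ≤ ∫ z, f z * g z := by
  obtain ⟨α, β, η, hα, hβ, hη, hfac⟩ := hfactor
  intro f hf ⟨M, hM⟩ hfmono
  set J₁ : Set ℝ := {x | p₁ ≤ x ∧ (x : EReal) < q₁} with hJ₁
  set J₂ : Set ℝ := {y | p₂ ≤ y ∧ (y : EReal) < q₂} with hJ₂
  have hCJ : C = J₁ ×ˢ J₂ := by
    rw [hC]
    ext z
    simp only [hJ₁, hJ₂, mem_ofPred_eq, mem_prod, and_assoc]
  have hord : J₁.OrdConnected :=
    ⟨fun x hx y hy z hz => ⟨hx.1.trans hz.1, (EReal.coe_le_coe_iff.2 hz.2).trans_lt hy.2⟩⟩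
  have hφC : ∀ z ∉ C, g z - h z = 0 := fun z hz => by rw [hgC z hz, hhC z hz, sub_zero]
  have d : FactoredDensity J₁ J₂ p₁ p₂ R (fun z => g z - h z) α β η :=
    { integrable := hgint.sub hhint
      integral_eq_zero := by rw [integral_sub hgint hhint, heq, sub_self]
      eq_zero_of_notMem := hCJ ▸ hφC
      isLeast_left := ⟨⟨le_rfl, hq₁⟩, fun x hx => hx.1⟩
      isLeast_right := ⟨⟨le_rfl, hq₂⟩, fun x hx => hx.1⟩
      subset := hCJ ▸ hRC
      decreasing := hCJ ▸ fun a ha b hb hab => hRdec a ha b hb hab.1 hab.2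
      eq_zero_of_mem := fun z hz => by rw [(hR0 z hz).1, (hR0 z hz).2, sub_zero]
      nonneg_left := hα
      nonneg_right := hβ
      monotoneOn := hCJ ▸ fun z hz w hw hzw => hη z hz w hw hzw.1 hzw.2
      factor := hCJ ▸ hfac
      column_nonpos := fun x hx => by
        have h1 := hline₂ _ hx
        rw [setIntegral_eq_integral_of_forall_compl_eq_zero] at h1
        swap
        · refine fun τ hτ => hφC _ fun hmem => hτ ⟨?_, hmem⟩
          have h2 := (hCJ ▸ hmem).2.1
          simpa using h2
        rwa [integral_add_left_eq_self (fun y => g (x, y) - h (x, y)) p₂] at h1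
      row_nonpos := fun y hy => by
        have h1 := hline₁ _ hy
        rw [setIntegral_eq_integral_of_forall_compl_eq_zero] at h1
        swap
        · refine fun τ hτ => hφC _ fun hmem => hτ ⟨?_, hmem⟩
          have h2 := (hCJ ▸ hmem).1.1
          simpa using h2
        rwa [integral_add_left_eq_self (fun x => g (x, y) - h (x, y)) p₁] at h1 }
  have hfi : ∀ {k : ℝ × ℝ → ℝ}, Integrable k → Integrable fun z => f z * k z :=
    fun hk => hk.bdd_mul hf.aestronglyMeasurable (.of_forall hM)
  have hadd : ∀ {k : ℝ × ℝ → ℝ}, Integrable k →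
      ∫ z, (f z + M) * k z = (∫ z, f z * k z) + M * ∫ z, k z := by
    intro k hk
    rw [← integral_const_mul, ← integral_add (hfi hk) (hk.const_mul M)]
    exact integral_congr_ae (.of_forall fun z => add_mul _ _ _)
  have key := integral_mul_le_integral_mul_of_superlevel (μ := volume) (F := fun z => f z + M)
    (hf.add_const M) hgm hhm (fun z => by linarith [neg_abs_le (f z), hM z]) hg0 hh0 hgint hhint
    (((hfi hgint).add (hgint.const_mul M)).congr (.of_forall fun z => (add_mul _ _ _).symm))
    fun t => by
      have h1 := d.setIntegral_nonneg_of_increasing hord hRne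
        (measurableSet_lt measurable_const (hf.add_const M) : MeasurableSet {z | t < f z + M})
        (hCJ ▸ fun z hz w hw hzw hlt => by
          have := hfmono z hz w hw hzw.1 hzw.2
          simp only [mem_ofPred_eq] at hlt ⊢
          linarith)
      rw [integral_sub hgint.integrableOn hhint.integrableOn] at h1
      linarith
  rw [hadd hgint, hadd hhint, heq] at key
  linarith
end

section
/- Coupling lemma for tight convex dominance: Let X = ∏_{i=1}^n [aᵢ, bᵢ] ⊂ ℝⁿ be a compact box with 0 ≤ aᵢ < bᵢ for each i. Let α and β be Borel probability measures on X with α ≼_cvx β, let u : X → ℝ be convex, coordinatewise nondecreasing, and 1-Lipschitz with respect to the ℓ¹ norm, with ∫_X u dα = ∫_X u dβ, and let g : X → [0,1]ⁿ be a Borel-measurable map such that for every z, y ∈ X, u(y) ≥ u(z) + g(z)·(y − z) (i.e., g(z) is a subgradient of u at z). Then there exists a Borel probability measure π on X × X with first marginal α and second marginal β such that, writing E_π[Y | 𝔉₁] for the conditional expectation under π of the second coordinate with respect to the σ-algebra generated by the first coordinate, the following hold π-almost surely at (a, b): (i) u(b) = u(a) + g(a)·(b − a); (ii) for all y ∈ X,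 u(y) ≥ u(b) + g(a)·(y − b), i.e., g(a) is a subgradient of u at b; (iii) E_π[Y | 𝔉₁] ≥ a componentwise; and (iv) u(E_π[Y | 𝔉₁]) = u(a). -/
open MeasureTheory Set

/-- A positive linear functional on `C(X, ℝ)`, `X` compact, is integration against a finite
measure. -/
lemma exists_finiteMeasure_integral_eq {X : Type*} [TopologicalSpace X] [CompactSpace X]
    [T2Space X] [MeasurableSpace X] [BorelSpace X] (L : C(X, ℝ) →ₗ[ℝ] ℝ)
    (hL : ∀ f : C(X, ℝ), 0 ≤ f → 0 ≤ L f) :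
    ∃ μ : Measure X, IsFiniteMeasure μ ∧ ∀ f : C(X, ℝ), ∫ x, f x ∂μ = L f := by
  let T : CompactlySupportedContinuousMap X ℝ →ₗ[ℝ] C(X, ℝ) :=
    { toFun := fun f => f.toContinuousMap
      map_add' := fun _ _ => rfl
      map_smul' := fun _ _ => rfl }
  let Λ : CompactlySupportedContinuousMap X ℝ →ₚ[ℝ] ℝ :=
    PositiveLinearMap.mk₀ (L ∘ₗ T) fun f hf => hL _ fun x => hf x
  refine ⟨RealRMK.rieszMeasure Λ, ⟨isCompact_univ.measure_lt_top⟩, fun f => ?_⟩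
  exact RealRMK.integral_rieszMeasure Λ (CompactlySupportedContinuousMap.continuousMapEquiv f)

/-- Weak duality for the transport problem with a one-sided martingale constraint. -/
lemma neg_le_integral_add_integral_of_dominance {n : ℕ} {K : Set (Fin n → ℝ)}
    (hKc : Convex ℝ K) [CompactSpace K]
    (α β : Measure K) [IsProbabilityMeasure α] [IsProbabilityMeasure β]
    (hdom : ∀ v : (Fin n → ℝ) → ℝ, memU K v → (∫ x : K, v x ∂α) ≤ ∫ x : K, v x ∂β)
    (c : ℝ) (φ ψ : C(K, ℝ)) (h : Fin n → C(K, ℝ)) (hh : ∀ i, 0 ≤ h i)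
    (hle : ∀ x y : K, -c ≤ φ x + ψ y - ∑ i, h i x * (y.1 i - x.1 i)) :
    -c ≤ ∫ x, φ x ∂α + ∫ x, ψ x ∂β := by
  have hne : Nonempty K := by
    by_contra hempty
    rw [not_nonempty_iff] at hempty
    exact (IsProbabilityMeasure.ne_zero α) (Measure.eq_zero_of_isEmpty α)
  let F : (Fin n → ℝ) → K → ℝ := fun y x => ∑ i, h i x * (y i - x.1 i) - c - φ x
  have hF : Continuous ↿F := by
    change Continuous fun p : (Fin n → ℝ) × K =>
      ∑ i, h i p.2 * (p.1 i - p.2.1 i) - c - φ p.2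
    have hcoord : ∀ i, Continuous fun p : (Fin n → ℝ) × K => p.2.1 i := fun i =>
      (continuous_apply i).comp (continuous_subtype_val.comp continuous_snd)
    fun_prop
  let v : (Fin n → ℝ) → ℝ := fun y => sSup (F y '' univ)
  have hv : Continuous v := isCompact_univ.continuous_sSup hF
  have hFv : ∀ y x, F y x ≤ v y := fun y x => by
    refine le_csSup ?_ (mem_image_of_mem _ (mem_univ x))
    exact (isCompact_univ.image (hF.comp (Continuous.prodMk_right y))).bddAbove
  have hvle : ∀ y r, (∀ x, F y x ≤ r) → v y ≤ r := fun y r hr => by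
    refine csSup_le (univ_nonempty.image _) ?_
    rintro _ ⟨x, -, rfl⟩
    exact hr x
  have hvU : memU K v := by
    refine ⟨hv.continuousOn, fun x _ y _ hxy => hvle _ _ fun z => le_trans ?_ (hFv y z),
      hKc, fun x _ y _ s t hs ht hst => hvle _ _ fun z => ?_⟩
    · simp only [F]
      gcongr with i
      · exact hh i z
      · exact hxy i
    · have h1 := mul_le_mul_of_nonneg_left (hFv x z) hs
      have h2 := mul_le_mul_of_nonneg_left (hFv y z) ht
      have h3 : F (s • x + t • y) z = s * F x z + t * F y z := by
        obtain rfl : s = 1 - t := by linarith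
        simp only [F, Pi.add_apply, Pi.smul_apply, smul_eq_mul, mul_sub, Finset.mul_sum]
        have : ∑ i, h i z * ((1 - t) * x i + t * y i - z.1 i) =
            ∑ i, (1 - t) * (h i z * (x i - z.1 i)) + ∑ i, t * (h i z * (y i - z.1 i)) := by
          rw [← Finset.sum_add_distrib]
          exact Finset.sum_congr rfl fun i _ => by ring
        simp only [mul_sub, Finset.sum_sub_distrib] at this ⊢
        linarith
      simp only [smul_eq_mul]
      linarith
  have hint : ∀ (μ : Measure K) [IsProbabilityMeasure μ] (f : K → ℝ), Continuous f →
      Integrable f μ := fun μ _ f hf =>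
    hf.integrable_of_hasCompactSupport (HasCompactSupport.of_compactSpace f)
  have h1 := hdom v hvU
  have h2 : ∫ x : K, v x ∂β ≤ ∫ x, ψ x ∂β :=
    integral_mono (hint _ _ (by fun_prop)) (hint _ _ (by fun_prop)) fun y =>
      hvle _ _ fun x => by have := hle x y; simp only [F]; linarith
  have h3 : ∫ x : K, (-c - v x) ∂α ≤ ∫ x, φ x ∂α :=
    integral_mono (hint _ _ (by fun_prop)) (hint _ _ (by fun_prop)) fun x => by
      have := hFv x x
      simp only [F, sub_self, mul_zero, Finset.sum_const_zero] at this
      simp only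
      linarith
  rw [integral_sub (integrable_const _) (hint _ _ (by fun_prop))] at h3
  simp at h3
  linarith

/-- Strassen's theorem for the increasing convex order on a compact convex set, with the
submartingale property expressed through continuous test functions. -/
lemma exists_coupling_of_dominance {n : ℕ} {K : Set (Fin n → ℝ)}
    (hKc : Convex ℝ K) [CompactSpace K]
    (α β : Measure K) [IsProbabilityMeasure α] [IsProbabilityMeasure β]
    (hdom : ∀ v : (Fin n → ℝ) → ℝ, memU K v → (∫ x : K, v x ∂α) ≤ ∫ x : K, v x ∂β) :
    ∃ π : Measure (K × K), IsProbabilityMeasure π ∧ π.map Prod.fst = α ∧ π.map Prod.snd = β ∧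
      ∀ (i : Fin n) (h : C(K, ℝ)), 0 ≤ h → 0 ≤ ∫ p, h p.1 * (p.2.1 i - p.1.1 i) ∂π := by
  have hint : ∀ (μ : Measure K) [IsProbabilityMeasure μ] (f : C(K, ℝ)), Integrable f μ :=
    fun μ _ f => f.continuous.integrable_of_hasCompactSupport (HasCompactSupport.of_compactSpace f)
  let S : C(K × K, ℝ) → Set ℝ := fun f => {r | ∃ (φ ψ : C(K, ℝ)) (h : Fin n → C(K, ℝ)),
    (∀ i, 0 ≤ h i) ∧ (∀ x y : K, f (x, y) ≤ φ x + ψ y - ∑ i, h i x * (y.1 i - x.1 i)) ∧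
      ∫ x, φ x ∂α + ∫ x, ψ x ∂β = r}
  have hSlb : ∀ f, ∀ r ∈ S f, -‖f‖ ≤ r := by
    rintro f _ ⟨φ, ψ, h, hh, hle, rfl⟩
    refine neg_le_integral_add_integral_of_dominance hKc α β hdom ‖f‖ φ ψ h hh fun x y => ?_
    exact (neg_le_of_abs_le (f.norm_coe_le_norm (x, y))).trans (hle x y)
  have hSbdd : ∀ f, BddBelow (S f) := fun f => ⟨-‖f‖, fun r hr => hSlb f r hr⟩
  have hSne : ∀ f, (S f).Nonempty := fun f => by
    refine ⟨_, ContinuousMap.const K ‖f‖, 0, 0, fun i => le_rfl, fun x y => ?_, rfl⟩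
    simpa using (le_abs_self _).trans (f.norm_coe_le_norm (x, y))
  have hSadd : ∀ f g, ∀ r ∈ S f, ∀ s ∈ S g, r + s ∈ S (f + g) := by
    rintro f g _ ⟨φ, ψ, h, hh, hle, rfl⟩ _ ⟨φ', ψ', h', hh', hle', rfl⟩
    refine ⟨φ + φ', ψ + ψ', h + h', fun i => add_nonneg (hh i) (hh' i), fun x y => ?_, ?_⟩
    · have h1 := hle x y
      have h2 := hle' x y
      simp only [ContinuousMap.add_apply, Pi.add_apply, add_mul, Finset.sum_add_distrib]
      linarith
    · simp only [ContinuousMap.add_apply]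
      rw [integral_add (hint _ _) (hint _ _), integral_add (hint _ _) (hint _ _)]
      ring
  have hSsmul : ∀ c : ℝ, 0 < c → ∀ f, ∀ r ∈ S f, c * r ∈ S (c • f) := by
    rintro c hc f _ ⟨φ, ψ, h, hh, hle, rfl⟩
    refine ⟨c • φ, c • ψ, c • h, fun i => smul_nonneg hc.le (hh i), fun x y => ?_, ?_⟩
    · have h1 := mul_le_mul_of_nonneg_left (hle x y) hc.le
      simp only [ContinuousMap.smul_apply, Pi.smul_apply, smul_eq_mul, mul_assoc,
        ← Finset.mul_sum]
      linarith
    · simp only [ContinuousMap.smul_apply, smul_eq_mul, integral_const_mul]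
      ring
  let N : C(K × K, ℝ) → ℝ := fun f => sInf (S f)
  have hNle : ∀ f, ∀ r ∈ S f, N f ≤ r := fun f r hr => csInf_le (hSbdd f) hr
  have hNsmul_le : ∀ c : ℝ, 0 < c → ∀ f, N (c • f) ≤ c * N f := fun c hc f => by
    rw [← div_le_iff₀' hc]
    refine le_csInf (hSne f) fun r hr => ?_
    rw [div_le_iff₀' hc]
    exact hNle _ _ (hSsmul c hc f r hr)
  have hN_hom : ∀ c : ℝ, 0 < c → ∀ f, N (c • f) = c * N f := fun c hc f => by
    refine le_antisymm (hNsmul_le c hc f) ?_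
    have := hNsmul_le c⁻¹ (inv_pos.2 hc) (c • f)
    rwa [smul_smul, inv_mul_cancel₀ hc.ne', one_smul, inv_mul_eq_div, le_div_iff₀' hc] at this
  have hN_add : ∀ f g, N (f + g) ≤ N f + N g := fun f g => by
    rw [← sub_le_iff_le_add]
    refine le_csInf (hSne f) fun r hr => ?_
    rw [sub_le_comm]
    refine le_csInf (hSne g) fun s hs => ?_
    rw [sub_le_iff_le_add']
    exact hNle _ _ (hSadd f g r hr s hs)
  have hN_zero : 0 ≤ N 0 := le_csInf (hSne 0) fun r hr => by simpa using hSlb 0 r hr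
  obtain ⟨L, -, hLN⟩ := exists_extension_of_le_sublinear (⊥ : C(K × K, ℝ) →ₗ.[ℝ] ℝ) N hN_hom
    hN_add (by
      rintro ⟨x, hx⟩
      obtain rfl : x = 0 := hx
      exact (LinearPMap.map_zero _).trans_le hN_zero)
  have hLS : ∀ f, ∀ r ∈ S f, L f ≤ r := fun f r hr => (hLN f).trans (hNle f r hr)
  have hLpos : ∀ f, 0 ≤ f → 0 ≤ L f := fun f hf => by
    have := hLS (-f) 0 ⟨0, 0, 0, fun i => le_rfl, fun x y => by simpa using hf (x, y), by simp⟩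
    simpa using this
  obtain ⟨π, hπ, hπL⟩ := exists_finiteMeasure_integral_eq L hLpos
  have eq_of_le : ∀ (T : C(K, ℝ) →ₗ[ℝ] ℝ) (μ : Measure K), (∀ φ, T φ ≤ ∫ x, φ x ∂μ) →
      ∀ φ, T φ = ∫ x, φ x ∂μ := fun T μ hT φ => by
    refine le_antisymm (hT φ) ?_
    have := hT (-φ)
    simp only [map_neg, ContinuousMap.neg_apply, integral_neg] at this
    linarith
  let fstL : C(K, ℝ) →ₗ[ℝ] C(K × K, ℝ) :=
    { toFun := fun φ => φ.comp ⟨Prod.fst, continuous_fst⟩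
      map_add' := fun _ _ => rfl
      map_smul' := fun _ _ => rfl }
  let sndL : C(K, ℝ) →ₗ[ℝ] C(K × K, ℝ) :=
    { toFun := fun φ => φ.comp ⟨Prod.snd, continuous_snd⟩
      map_add' := fun _ _ => rfl
      map_smul' := fun _ _ => rfl }
  have hfst := eq_of_le (L ∘ₗ fstL) α fun φ =>
    hLS _ _ ⟨φ, 0, 0, fun i => le_rfl, fun x y => by simp [fstL], by simp⟩
  have hsnd := eq_of_le (L ∘ₗ sndL) β fun φ =>
    hLS _ _ ⟨0, φ, 0, fun i => le_rfl, fun x y => by simp [sndL], by simp⟩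
  have hmap_fst : π.map Prod.fst = α := by
    refine ext_of_forall_integral_eq_of_IsFiniteMeasure fun f => ?_
    rw [integral_map measurable_fst.aemeasurable f.continuous.aestronglyMeasurable]
    exact (hπL (fstL f.toContinuousMap)).trans (hfst _)
  have hmap_snd : π.map Prod.snd = β := by
    refine ext_of_forall_integral_eq_of_IsFiniteMeasure fun f => ?_
    rw [integral_map measurable_snd.aemeasurable f.continuous.aestronglyMeasurable]
    exact (hπL (sndL f.toContinuousMap)).trans (hsnd _)
  have hprob : IsProbabilityMeasure π := by
    refine ⟨?_⟩
    rw [← measure_univ (μ := α), ← hmap_fst, Measure.map_apply measurable_fst .univ, preimage_univ]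
  refine ⟨π, hprob, hmap_fst, hmap_snd, fun i h hh => ?_⟩
  have hcoord : ∀ j, Continuous fun x : K => x.1 j := fun j =>
    (continuous_apply j).comp continuous_subtype_val
  let f : C(K × K, ℝ) := ⟨fun p => h p.1 * (p.2.1 i - p.1.1 i),
    (h.continuous.comp continuous_fst).mul
      (((hcoord i).comp continuous_snd).sub ((hcoord i).comp continuous_fst))⟩
  have h1 := hLS (-f) 0 ⟨0, 0, Pi.single i h, fun j => by
      by_cases hj : j = i
      · subst hj; simpa using hh
      · simp [hj], fun x y => by
      rw [Finset.sum_eq_single i (fun j _ hj => by simp [hj]) (by simp)]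
      simp [f], by simp⟩
  rw [map_neg, neg_nonpos] at h1
  exact h1.trans_eq (hπL f).symm

/-- Integrals against a measure concentrated on `K` agree with integrals over the subtype. -/
lemma integral_comap_subtype_val_of_measure_compl_eq_zero {E : Type*} [MeasurableSpace E]
    {K : Set E} (hK : MeasurableSet K) {μ : Measure E} (hμ : μ Kᶜ = 0) (v : E → ℝ) :
    ∫ x : K, v x ∂(μ.comap Subtype.val) = ∫ x, v x ∂μ := by
  rw [integral_subtype_comap hK, Measure.restrict_eq_self_of_ae_mem (mem_ae_iff.2 hμ)]

/-- The subtype measure of a measure concentrated on `K` pushes forward to it. -/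
lemma map_val_comap_val_of_measure_compl_eq_zero {E : Type*} [MeasurableSpace E]
    {K : Set E} (hK : MeasurableSet K) {μ : Measure E} (hμ : μ Kᶜ = 0) :
    (μ.comap (Subtype.val : K → E)).map Subtype.val = μ := by
  rw [map_comap_subtype_coe hK, Measure.restrict_eq_self_of_ae_mem (mem_ae_iff.2 hμ)]

/-- Strassen's theorem for the increasing convex order, for measures on `Fin n → ℝ` concentrated
on a compact convex set. -/
lemma exists_coupling_of_dominance_of_isCompact {n : ℕ} {K : Set (Fin n → ℝ)}
    (hKc : Convex ℝ K) (hK : IsCompact K)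
    (α β : Measure (Fin n → ℝ)) [IsProbabilityMeasure α] [IsProbabilityMeasure β]
    (hα : α Kᶜ = 0) (hβ : β Kᶜ = 0)
    (hdom : ∀ v : (Fin n → ℝ) → ℝ, memU K v → (∫ x, v x ∂α) ≤ ∫ x, v x ∂β) :
    ∃ π : Measure ((Fin n → ℝ) × (Fin n → ℝ)), IsProbabilityMeasure π ∧
      π.map Prod.fst = α ∧ π.map Prod.snd = β ∧
      ∀ (i : Fin n) (h : C(Fin n → ℝ, ℝ)), 0 ≤ h → 0 ≤ ∫ p, h p.1 * (p.2 i - p.1 i) ∂π := by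
  have := isCompact_iff_compactSpace.1 hK
  have hKm := hK.measurableSet
  have hprob : ∀ μ : Measure (Fin n → ℝ), IsProbabilityMeasure μ → μ Kᶜ = 0 →
      IsProbabilityMeasure (μ.comap (Subtype.val : K → Fin n → ℝ)) := fun μ _ hμ => by
    refine ⟨?_⟩
    rw [← measure_univ (μ := μ)]
    conv_rhs => rw [← map_val_comap_val_of_measure_compl_eq_zero hKm hμ,
      Measure.map_apply measurable_subtype_coe .univ, preimage_univ]
  have := hprob α ‹_› hα
  have := hprob β ‹_› hβ
  obtain ⟨π, hπ, hfst, hsnd, hsub⟩ := exists_coupling_of_dominance hKc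
    (α.comap Subtype.val) (β.comap Subtype.val) fun v hv => by
      rw [integral_comap_subtype_val_of_measure_compl_eq_zero hKm hα,
        integral_comap_subtype_val_of_measure_compl_eq_zero hKm hβ]
      exact hdom v hv
  have hval : Measurable (Subtype.val : K → Fin n → ℝ) := measurable_subtype_coe
  have hm : Measurable (Prod.map Subtype.val Subtype.val : K × K → (Fin n → ℝ) × (Fin n → ℝ)) :=
    hval.prodMap hval
  refine ⟨π.map (Prod.map Subtype.val Subtype.val),
    Measure.isProbabilityMeasure_map hm.aemeasurable, ?_, ?_, fun i h hh => ?_⟩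
  · rw [← map_val_comap_val_of_measure_compl_eq_zero hKm hα, ← hfst,
      Measure.map_map measurable_fst hm, Measure.map_map hval measurable_fst]
    rfl
  · rw [← map_val_comap_val_of_measure_compl_eq_zero hKm hβ, ← hsnd,
      Measure.map_map measurable_snd hm, Measure.map_map hval measurable_snd]
    rfl
  · rw [integral_map hm.aemeasurable]
    · exact hsub i (h.comp ⟨Subtype.val, continuous_subtype_val⟩) fun x => hh x
    · exact Continuous.aestronglyMeasurable (by fun_prop)

/-- If a bounded function integrates nonnegatively against every nonnegative continuous function of
the first coordinate, its conditional expectation given the first coordinate is nonnegative. -/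
lemma condExp_fst_nonneg_of_forall_continuous {E F : Type*} [TopologicalSpace E] [NormalSpace E]
    [MeasurableSpace E] [BorelSpace E] [MeasurableSpace F] (π : Measure (E × F))
    [IsFiniteMeasure π] [(π.map Prod.fst).WeaklyRegular] (D : E × F → ℝ) (C : ℝ)
    (hDm : AEStronglyMeasurable D π) (hD : ∀ᵐ p ∂π, ‖D p‖ ≤ C)
    (hcont : ∀ h : C(E, ℝ), 0 ≤ h → 0 ≤ ∫ p, h p.1 * D p ∂π) :
    0 ≤ᵐ[π] π[D | MeasurableSpace.comap Prod.fst inferInstance] := by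
  have hDint : Integrable D π := Integrable.of_bound hDm C hD
  have hset : ∀ A : Set E, MeasurableSet A → 0 ≤ ∫ p in Prod.fst ⁻¹' A, D p ∂π := fun A hA => by
    refine le_of_forall_pos_le_add fun ε hε => ?_
    have hind : Integrable (A.indicator fun _ => (1 : ℝ)) (π.map Prod.fst) :=
      (integrable_const 1).indicator hA
    obtain ⟨h, hhle, hhint⟩ := hind.exists_boundedContinuous_integral_sub_le
      (ε := ε / (|C| + 1)) (by positivity)
    have hnorm : Integrable (fun x => ‖A.indicator (fun _ => (1 : ℝ)) x - h x‖)
        (π.map Prod.fst) := (hind.sub hhint).norm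
    rw [integral_map measurable_fst.aemeasurable hnorm.aestronglyMeasurable] at hhle
    let k : C(E, ℝ) := ⟨fun x => max (h x) 0, h.continuous.max continuous_const⟩
    have hk := hcont k fun x => le_max_right _ _
    have hkint : Integrable (fun p : E × F => k p.1 * D p) π := by
      refine hDint.bdd_mul (c := ‖h‖)
        (k.continuous.measurable.comp measurable_fst).aestronglyMeasurable (.of_forall fun p => ?_)
      have := abs_le.1 (h.norm_coe_le_norm p.1)
      simp only [k, ContinuousMap.coe_mk, Real.norm_eq_abs]
      rw [abs_of_nonneg (le_max_right _ _)]
      exact max_le this.2 (norm_nonneg h)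
    have hdiff : Integrable (fun p : E × F => ‖A.indicator (fun _ => (1 : ℝ)) p.1 - h p.1‖) π :=
      hnorm.comp_measurable measurable_fst
    have hmono : ∫ p, k p.1 * D p ∂π ≤ ∫ p, ((Prod.fst ⁻¹' A).indicator D p +
        (|C| + 1) * ‖A.indicator (fun _ => (1 : ℝ)) p.1 - h p.1‖) ∂π := by
      refine integral_mono_ae hkint
        ((hDint.indicator (measurable_fst hA)).add (hdiff.const_mul _)) ?_
      filter_upwards [hD] with p hp
      have hC : |D p| ≤ |C| + 1 := hp.trans ((le_abs_self C).trans (by linarith))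
      have hi : (Prod.fst ⁻¹' A).indicator D p = A.indicator (fun _ => (1 : ℝ)) p.1 * D p := by
        by_cases hpA : p.1 ∈ A <;> simp [indicator, hpA]
      have hkd : |k p.1 - A.indicator (fun _ => (1 : ℝ)) p.1| ≤
          ‖A.indicator (fun _ => (1 : ℝ)) p.1 - h p.1‖ := by
        have h0 : (0 : ℝ) ≤ A.indicator (fun _ => (1 : ℝ)) p.1 :=
          indicator_nonneg (fun _ _ => zero_le_one) _
        rw [Real.norm_eq_abs, abs_sub_comm (A.indicator (fun _ => (1 : ℝ)) p.1)]
        have := abs_max_sub_max_le_abs (h p.1) (A.indicator (fun _ => (1 : ℝ)) p.1) 0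
        rwa [max_eq_left h0] at this
      have hprod : (k p.1 - A.indicator (fun _ => (1 : ℝ)) p.1) * D p ≤
          (|C| + 1) * ‖A.indicator (fun _ => (1 : ℝ)) p.1 - h p.1‖ := by
        refine (le_abs_self _).trans ?_
        rw [abs_mul, mul_comm]
        gcongr
      rw [hi]
      linarith
    rw [integral_add (hDint.indicator (measurable_fst hA)) (hdiff.const_mul _),
      integral_indicator (measurable_fst hA), integral_const_mul] at hmono
    have hfin := mul_le_mul_of_nonneg_left hhle (by positivity : 0 ≤ |C| + 1)
    rw [mul_div_cancel₀ _ (by positivity)] at hfin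
    linarith
  have hm : MeasurableSpace.comap (Prod.fst : E × F → E) inferInstance ≤
      (inferInstance : MeasurableSpace (E × F)) := measurable_fst.comap_le
  refine ae_le_of_ae_le_trim (hm := hm) (f₁ := 0) ?_
  refine ae_nonneg_of_forall_setIntegral_nonneg
    (integrable_condExp.trim hm stronglyMeasurable_condExp) fun s hs _ => ?_
  rw [← setIntegral_trim hm stronglyMeasurable_condExp hs, setIntegral_condExp hm hDint hs]
  obtain ⟨A, hA, rfl⟩ := hs
  exact hset A hA

lemma box_eq_Icc {n : ℕ} (a b : Fin n → ℝ) : box a b = Icc a b := by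
  ext x
  simp only [box, mem_ofPred_eq, mem_Icc, Pi.le_def, forall_and]

lemma memL1.continuousOn {n : ℕ} {X : Set (Fin n → ℝ)} {u : (Fin n → ℝ) → ℝ} (hu : memL1 X u) :
    ContinuousOn u X := fun x hx => by
  have hlim : Filter.Tendsto (fun y => l1dist y x) (nhdsWithin x X) (nhds 0) := by
    have hc : Continuous fun y => l1dist y x := by unfold l1dist; fun_prop
    have h0 : l1dist x x = 0 := by simp [l1dist]
    exact h0 ▸ hc.continuousWithinAt.tendsto
  refine tendsto_iff_dist_tendsto_zero.2
    (squeeze_zero' (.of_forall fun _ => dist_nonneg) ?_ hlim)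
  filter_upwards [self_mem_nhdsWithin] with y hy
  have hsymm : l1dist x y = l1dist y x := by simp only [l1dist, abs_sub_comm]
  rw [Real.dist_eq, abs_le]
  constructor
  · linarith [hu x hx y hy]
  · exact hu y hy x hx

/-- A function continuous on a compact set is integrable along any map that almost surely takes
values in that set. -/
lemma ContinuousOn.integrable_comp_of_ae_mem {Ω E : Type*} {_ : MeasurableSpace Ω} [TopologicalSpace E]
    [T2Space E] [MeasurableSpace E] [BorelSpace E] {μ : Measure Ω} [IsFiniteMeasure μ]
    {K : Set E} (hK : IsCompact K) {u : E → ℝ} (hu : ContinuousOn u K) {Y : Ω → E}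
    (hY : AEMeasurable Y μ) (hmem : ∀ᵐ ω ∂μ, Y ω ∈ K) : Integrable (fun ω => u (Y ω)) μ := by
  have hint : Integrable u (μ.map Y) := by
    have := hu.integrableOn_compact hK (μ := μ.map Y)
    rwa [IntegrableOn, Measure.restrict_eq_self_of_ae_mem
      ((ae_map_iff hY hK.measurableSet).2 hmem)] at this
  exact hint.comp_aemeasurable hY

/-- Two comparable integrable functions with reversed integrals agree almost everywhere. -/
lemma ae_eq_of_ae_le_of_integral_ge {Ω : Type*} {_ : MeasurableSpace Ω} {μ : Measure Ω} {f g : Ω → ℝ}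
    (hf : Integrable f μ) (hg : Integrable g μ) (hle : f ≤ᵐ[μ] g)
    (hint : ∫ ω, g ω ∂μ ≤ ∫ ω, f ω ∂μ) : f =ᵐ[μ] g :=
  (integral_eq_iff_of_ae_le hf hg hle).1 (le_antisymm (integral_mono_ae hf hg hle) hint)

/-- **Coupling lemma for tight convex dominance.** Let `α ≼_cvx β` be Borel probability
measures on the box `X`, let `u` be convex, coordinatewise nondecreasing and 1-Lipschitz
(w.r.t. ℓ¹) on `X` with `∫ u dα = ∫ u dβ`, and let `g` be a measurable selection of
subgradients of `u` with values in `[0,1]ⁿ`. Then there is a coupling `π` of `α` and `β`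
such that `π`-a.s. at `(a,b)`: (i) `u(b) = u(a) + g(a)·(b − a)`; (ii) `g(a)` is a
subgradient of `u` at `b`; (iii) `E_π[Y | 𝔉₁] ≥ a` componentwise; and
(iv) `u(E_π[Y | 𝔉₁]) = u(a)`, where `𝔉₁` is the σ-algebra generated by the first
coordinate and `Y` the second-coordinate map. -/
theorem coupling_lemma_tight_convex_dominance {n : ℕ} (a b : Fin n → ℝ)
    (hab : ∀ i, 0 ≤ a i ∧ a i < b i)
    (α β : Measure (Fin n → ℝ)) [IsProbabilityMeasure α] [IsProbabilityMeasure β]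
    (hαsupp : α (box a b)ᶜ = 0) (hβsupp : β (box a b)ᶜ = 0)
    (hdom : ∀ v : (Fin n → ℝ) → ℝ, memU (box a b) v → (∫ x, v x ∂α) ≤ ∫ x, v x ∂β)
    (u : (Fin n → ℝ) → ℝ)
    (huconv : ConvexOn ℝ (box a b) u)
    (humono : ∀ x ∈ box a b, ∀ y ∈ box a b, (∀ i, x i ≤ y i) → u x ≤ u y)
    (hulip : ∀ x ∈ box a b, ∀ y ∈ box a b, u x - u y ≤ l1dist x y)
    (htight : (∫ x, u x ∂α) = ∫ x, u x ∂β)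
    (g : (Fin n → ℝ) → (Fin n → ℝ)) (hgmeas : Measurable g)
    (hg01 : ∀ z i, g z i ∈ Set.Icc (0:ℝ) 1)
    (hgsub : ∀ z ∈ box a b, ∀ y ∈ box a b, u z + ∑ i, g z i * (y i - z i) ≤ u y) :
    ∃ π : Measure ((Fin n → ℝ) × (Fin n → ℝ)), IsProbabilityMeasure π ∧
      π.map Prod.fst = α ∧ π.map Prod.snd = β ∧
      (∀ᵐ ab ∂π,
        (u ab.2 = u ab.1 + ∑ i, g ab.1 i * (ab.2 i - ab.1 i)) ∧
        (∀ y ∈ box a b, u ab.2 + ∑ i, g ab.1 i * (y i - ab.2 i) ≤ u y) ∧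
        (∀ i, ab.1 i ≤
          (π[(fun p : (Fin n → ℝ) × (Fin n → ℝ) => p.2) |
            MeasurableSpace.comap Prod.fst inferInstance]) ab i) ∧
        u ((π[(fun p : (Fin n → ℝ) × (Fin n → ℝ) => p.2) |
            MeasurableSpace.comap Prod.fst inferInstance]) ab) = u ab.1) := by
  have hbox : box a b = Icc a b := box_eq_Icc a b
  have hK : IsCompact (box a b) := hbox ▸ isCompact_Icc
  have hKc : Convex ℝ (box a b) := hbox ▸ convex_Icc a b
  have hucont : ContinuousOn u (box a b) := memL1.continuousOn hulip
  obtain ⟨π, hπ, hfst, hsnd, hsub⟩ :=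
    exists_coupling_of_dominance_of_isCompact hKc hK α β hαsupp hβsupp hdom
  refine ⟨π, hπ, hfst, hsnd, ?_⟩
  have hm : MeasurableSpace.comap (Prod.fst : (Fin n → ℝ) × (Fin n → ℝ) → (Fin n → ℝ))
      inferInstance ≤ (inferInstance : MeasurableSpace ((Fin n → ℝ) × (Fin n → ℝ))) :=
    measurable_fst.comap_le
  have hmem₁ : ∀ᵐ p ∂π, p.1 ∈ box a b := by
    refine ae_of_ae_map measurable_fst.aemeasurable (p := fun x => x ∈ box a b) ?_
    rw [hfst]
    exact mem_ae_iff.2 hαsupp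
  have hmem₂ : ∀ᵐ p ∂π, p.2 ∈ box a b := by
    refine ae_of_ae_map measurable_snd.aemeasurable (p := fun x => x ∈ box a b) ?_
    rw [hsnd]
    exact mem_ae_iff.2 hβsupp
  have hcoord₁ : ∀ i, Integrable (fun p : (Fin n → ℝ) × (Fin n → ℝ) => p.1 i) π := fun i =>
    (continuous_apply i).continuousOn.integrable_comp_of_ae_mem hK measurable_fst.aemeasurable hmem₁
  have hcoord₂ : ∀ i, Integrable (fun p : (Fin n → ℝ) × (Fin n → ℝ) => p.2 i) π := fun i =>
    (continuous_apply i).continuousOn.integrable_comp_of_ae_mem hK measurable_snd.aemeasurable hmem₂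
  have hY : Integrable (fun p : (Fin n → ℝ) × (Fin n → ℝ) => p.2) π := Integrable.of_eval hcoord₂
  have hdiff : ∀ i, Integrable (fun p : (Fin n → ℝ) × (Fin n → ℝ) => p.2 i - p.1 i) π := fun i =>
    (hcoord₂ i).sub (hcoord₁ i)
  set m : MeasurableSpace ((Fin n → ℝ) × (Fin n → ℝ)) :=
    MeasurableSpace.comap Prod.fst inferInstance
  set Z := π[(fun p : (Fin n → ℝ) × (Fin n → ℝ) => p.2) | m]
  have hfst_m : Measurable[m] (Prod.fst : (Fin n → ℝ) × (Fin n → ℝ) → (Fin n → ℝ)) :=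
    comap_measurable _
  have hcond : ∀ i, 0 ≤ᵐ[π] π[(fun p : (Fin n → ℝ) × (Fin n → ℝ) => p.2 i - p.1 i) | m] :=
    fun i => by
    refine condExp_fst_nonneg_of_forall_continuous π _ (b i - a i) (hdiff i).aestronglyMeasurable
      ?_ (hsub i)
    filter_upwards [hmem₁, hmem₂] with p h1 h2
    have h1 := h1 i
    have h2 := h2 i
    rw [Real.norm_eq_abs, abs_le]
    constructor <;> linarith [h1.1, h1.2, h2.1, h2.2]
  have hle : ∀ᵐ p ∂π, ∀ i, p.1 i ≤ Z p i := by
    refine ae_all_iff.2 fun i => ?_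
    have h1 := condExp_sub (hcoord₂ i) (hcoord₁ i) m
    have h2 := (ContinuousLinearMap.proj (R := ℝ) (φ := fun _ : Fin n => ℝ) i).comp_condExp_comm
      (m := m) hY
    have h3 : π[(fun p : (Fin n → ℝ) × (Fin n → ℝ) => p.1 i) | m] = fun p => p.1 i :=
      condExp_of_stronglyMeasurable hm
        ((measurable_pi_apply i).comp hfst_m).stronglyMeasurable (hcoord₁ i)
    filter_upwards [hcond i, h1, h2] with p hp h1 h2
    have hp' : 0 ≤ (π[(fun p : (Fin n → ℝ) × (Fin n → ℝ) => p.2 i) | m] -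
      π[(fun p : (Fin n → ℝ) × (Fin n → ℝ) => p.1 i) | m]) p := hp.trans_eq h1
    rw [h3] at hp'
    have h2' : Z p i = π[(fun p : (Fin n → ℝ) × (Fin n → ℝ) => p.2 i) | m] p := h2
    rw [h2']
    exact sub_nonneg.1 hp'
  have hZmem : ∀ᵐ p ∂π, Z p ∈ box a b := hKc.condExp_mem hm hY hK.isClosed hmem₂
  have hu₁ : Integrable (fun p : (Fin n → ℝ) × (Fin n → ℝ) => u p.1) π :=
    hucont.integrable_comp_of_ae_mem hK measurable_fst.aemeasurable hmem₁
  have hu₂ : Integrable (fun p : (Fin n → ℝ) × (Fin n → ℝ) => u p.2) π :=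
    hucont.integrable_comp_of_ae_mem hK measurable_snd.aemeasurable hmem₂
  have huZ : Integrable (fun p => u (Z p)) π :=
    hucont.integrable_comp_of_ae_mem hK integrable_condExp.aestronglyMeasurable.aemeasurable hZmem
  have hint : ∫ p, u p.2 ∂π = ∫ p, u p.1 ∂π := by
    have huint : ∀ μ : Measure (Fin n → ℝ), IsProbabilityMeasure μ → μ (box a b)ᶜ = 0 →
        AEStronglyMeasurable u μ := fun μ _ hμ =>
      (hucont.integrable_comp_of_ae_mem hK aemeasurable_id (mem_ae_iff.2 hμ)).aestronglyMeasurable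
    rw [← hfst, ← hsnd, integral_map measurable_fst.aemeasurable (hfst ▸ huint α ‹_› hαsupp),
      integral_map measurable_snd.aemeasurable (hsnd ▸ huint β ‹_› hβsupp)] at htight
    exact htight.symm
  have hpull : ∀ i, Integrable (fun p : (Fin n → ℝ) × (Fin n → ℝ) => g p.1 i * (p.2 i - p.1 i)) π ∧
      0 ≤ ∫ p, g p.1 i * (p.2 i - p.1 i) ∂π := fun i => by
    have hgi : Measurable[m] fun p : (Fin n → ℝ) × (Fin n → ℝ) => g p.1 i :=
      ((measurable_pi_apply i).comp hgmeas).comp hfst_m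
    have hprod : Integrable
        (fun p : (Fin n → ℝ) × (Fin n → ℝ) => g p.1 i * (p.2 i - p.1 i)) π := by
      refine (hdiff i).bdd_mul (c := 1) (hgi.mono hm le_rfl).aestronglyMeasurable
        (.of_forall fun p => ?_)
      rw [Real.norm_eq_abs, abs_of_nonneg (hg01 _ i).1]
      exact (hg01 _ i).2
    refine ⟨hprod, ?_⟩
    rw [← integral_condExp hm]
    refine integral_nonneg_of_ae ?_
    filter_upwards [hcond i, condExp_mul_of_stronglyMeasurable_left hgi.stronglyMeasurable hprod
      (hdiff i)] with p hp hmul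
    refine le_trans ?_ hmul.ge
    exact mul_nonneg (hg01 _ i).1 hp
  have hsumint := integrable_finsetSum Finset.univ fun i _ => (hpull i).1
  have htangent : (fun p : (Fin n → ℝ) × (Fin n → ℝ) =>
      u p.1 + ∑ i, g p.1 i * (p.2 i - p.1 i)) =ᵐ[π] fun p => u p.2 := by
    refine ae_eq_of_ae_le_of_integral_ge (hu₁.add hsumint) hu₂ ?_ ?_
    · filter_upwards [hmem₁, hmem₂] with p h1 h2 using hgsub _ h1 _ h2
    · rw [integral_add hu₁ hsumint, integral_finsetSum _ fun i _ => (hpull i).1, hint]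
      linarith [Finset.sum_nonneg fun i (_ : i ∈ Finset.univ) => (hpull i).2]
  have hjensen : ∫ p, u (Z p) ∂π ≤ ∫ p, u p.2 ∂π := by
    have h1 := huconv.map_condExp_le hm hucont.lowerSemicontinuousOn hmem₂ hK.isClosed hY hu₂
    exact (integral_mono_ae huZ integrable_condExp h1).trans_eq (integral_condExp hm)
  have hbary : (fun p : (Fin n → ℝ) × (Fin n → ℝ) => u p.1) =ᵐ[π] fun p => u (Z p) := by
    refine ae_eq_of_ae_le_of_integral_ge hu₁ huZ ?_ (hjensen.trans_eq hint)
    filter_upwards [hmem₁, hZmem, hle] with p h1 h2 h3 using humono _ h1 _ h2 h3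
  filter_upwards [hmem₁, hle, htangent, hbary] with p h1 hle htangent hbary
  refine ⟨htangent.symm, fun y hy => ?_, hle, hbary.symm⟩
  refine le_trans (le_of_eq ?_) (hgsub _ h1 y hy)
  rw [← htangent, add_assoc, ← Finset.sum_add_distrib]
  congr 1
  exact Finset.sum_congr rfl fun i _ => by ring
end
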